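/- arXiv:2305.19368 — 9 statements merged into one kernel-verified Lean document; each statement's English description precedes it below -/
import Mathlib

section
/- Let U be a nonzero finite-dimensional F_q-vector space, g ∈ GL(U), j ∈ {0,…,q−2}, and v, w ∈ U \ {0}. Then v ∼_g w if and only if W_j(g;v) = W_j(g;w); moreover, if v ≁_g w then W_j(g;v) ∩ W_j(g;w) = {0}. -/
/-- The "j-th Weil vector" `u^{(j)} := ∑_{i=0}^{q-2} λ^{-ij} e_{α^i • u}` in the total Weil
module `U →₀ ℂ`. -/
noncomputable def weilVec {Fq U : Type*} [Field Fq] [AddCommGroup U] [Module Fq U]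
    (q : ℕ) (α : Fq) (lam : ℂ) (j : ℕ) (u : U) : U →₀ ℂ :=
  ∑ i ∈ Finset.range (q - 1), (lam ^ (i * j))⁻¹ • Finsupp.single ((α ^ i) • u) (1 : ℂ)

/-- The `g`-cyclic subspace `W_j(g;v)` of the Weil module, the ℂ-span of the vectors
`g^i · v^{(j)}`, `i ≥ 0`. -/
noncomputable def cycSub {Fq U : Type*} [Field Fq] [AddCommGroup U] [Module Fq U]
    (q : ℕ) (α : Fq) (lam : ℂ) (j : ℕ) (g : U ≃ₗ[Fq] U) (v : U) :
    Submodule ℂ (U →₀ ℂ) :=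
  Submodule.span ℂ
    (Set.range fun i : ℕ => ((Finsupp.lmapDomain ℂ ℂ ⇑g) ^ i) (weilVec q α lam j v))

section aux
variable {Fq U : Type*} [Field Fq] [AddCommGroup U] [Module Fq U]

lemma weilVec_smul_gen (q : ℕ) (α : Fq) (lam : ℂ) (j : ℕ) (hl : lam ≠ 0)
    (h1 : α ^ (q - 1) = 1) (h2 : lam ^ (q - 1) = 1) (u : U) :
    weilVec q α lam j (α • u) = lam ^ j • weilVec q α lam j u := by
  have key : ∀ f : ℕ → (U →₀ ℂ), f (q - 1) = f 0 →
      ∑ i ∈ Finset.range (q - 1), f (i + 1) = ∑ i ∈ Finset.range (q - 1), f i := by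
    intro f hf
    have a := Finset.sum_range_succ f (q - 1)
    rw [Finset.sum_range_succ', hf] at a
    exact add_right_cancel a
  unfold weilVec
  rw [← key (fun i => (lam ^ (i * j))⁻¹ • Finsupp.single ((α ^ i) • u) (1 : ℂ))
    (by simp [h1, pow_mul, h2]), Finset.smul_sum]
  refine Finset.sum_congr rfl fun i _ => ?_
  rw [smul_smul, smul_smul, ← pow_succ]
  congr 1
  rw [add_mul, one_mul, pow_add]
  field_simp

lemma weilVec_smul_pow (q : ℕ) (α : Fq) (lam : ℂ) (j : ℕ) (hl : lam ≠ 0)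
    (h1 : α ^ (q - 1) = 1) (h2 : lam ^ (q - 1) = 1) (k : ℕ) (u : U) :
    weilVec q α lam j (α ^ k • u) = (lam ^ j) ^ k • weilVec q α lam j u := by
  induction k with
  | zero => simp
  | succ k ih =>
    rw [pow_succ', mul_smul, weilVec_smul_gen q α lam j hl h1 h2, ih, smul_smul, ← pow_succ']

lemma lmap_pow_weilVec (q : ℕ) (α : Fq) (lam : ℂ) (j : ℕ) (g : U ≃ₗ[Fq] U) (i : ℕ) (v : U) :
    ((Finsupp.lmapDomain ℂ ℂ ⇑g) ^ i) (weilVec q α lam j v) = weilVec q α lam j ((g ^ i) v) := by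
  induction i with
  | zero => simp
  | succ i ih =>
    rw [pow_succ', Module.End.mul_apply, ih, pow_succ' g, LinearEquiv.mul_apply]
    simp [weilVec, map_sum, Finsupp.mapDomain_single, -Finsupp.smul_single]

lemma weilVec_mem_cycSub (q : ℕ) (α : Fq) (lam : ℂ) (j : ℕ) (g : U ≃ₗ[Fq] U) (i : ℕ) (v : U) :
    weilVec q α lam j ((g ^ i) v) ∈ cycSub q α lam j g v :=
  Submodule.subset_span ⟨i, lmap_pow_weilVec q α lam j g i v⟩

lemma cycSub_le (q : ℕ) (α : Fq) (lam : ℂ) (j : ℕ) (hl : lam ≠ 0)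
    (h1 : α ^ (q - 1) = 1) (h2 : lam ^ (q - 1) = 1)
    (hα : ∀ x : Fq, x ≠ 0 → ∃ i : ℕ, x = α ^ i) (g : U ≃ₗ[Fq] U) (v w : U)
    (h : ∃ (β : Fq) (r : ℕ), β ≠ 0 ∧ w = β • (g ^ r) v) :
    cycSub q α lam j g w ≤ cycSub q α lam j g v := by
  obtain ⟨β, r, hβ, rfl⟩ := h
  obtain ⟨k, rfl⟩ := hα β hβ
  refine Submodule.span_le.2 ?_
  rintro _ ⟨i, rfl⟩
  simp only [lmap_pow_weilVec, map_smul, SetLike.mem_coe]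
  rw [weilVec_smul_pow q α lam j hl h1 h2, ← LinearEquiv.mul_apply, ← pow_add]
  exact Submodule.smul_mem _ _ (weilVec_mem_cycSub q α lam j g _ v)

lemma cycSub_le_supported (q : ℕ) (α : Fq) (lam : ℂ) (j : ℕ) (h0 : α ≠ 0)
    (g : U ≃ₗ[Fq] U) (v : U) :
    cycSub q α lam j g v ≤
      Finsupp.supported ℂ ℂ {x | ∃ (β : Fq) (r : ℕ), β ≠ 0 ∧ x = β • (g ^ r) v} := by
  refine Submodule.span_le.2 ?_
  rintro _ ⟨i, rfl⟩
  simp only [lmap_pow_weilVec, SetLike.mem_coe]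
  refine Submodule.sum_mem _ fun k _ => Submodule.smul_mem _ _ ?_
  exact Finsupp.single_mem_supported ℂ _ ⟨α ^ k, i, pow_ne_zero _ h0, rfl⟩

lemma rel_symm [Finite U] (g : U ≃ₗ[Fq] U) (v w : U)
    (h : ∃ (β : Fq) (r : ℕ), β ≠ 0 ∧ w = β • (g ^ r) v) :
    ∃ (β : Fq) (r : ℕ), β ≠ 0 ∧ v = β • (g ^ r) w := by
  obtain ⟨β, r, hβ, rfl⟩ := h
  haveI : Finite (U ≃ₗ[Fq] U) := Finite.of_injective (fun e => (e : U → U)) DFunLike.coe_injective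
  have hm := orderOf_pos g
  refine ⟨β⁻¹, (orderOf g - 1) * r, inv_ne_zero hβ, ?_⟩
  rw [map_smul, smul_smul, inv_mul_cancel₀ hβ, one_smul, ← LinearEquiv.mul_apply, ← pow_add]
  have : (orderOf g - 1) * r + r = orderOf g * r := by
    obtain ⟨m, hm'⟩ : ∃ m, orderOf g = m + 1 := ⟨orderOf g - 1, by omega⟩
    rw [hm']; simp; ring
  rw [this, pow_mul, pow_orderOf_eq_one, one_pow]; rfl

lemma rel_trans (g : U ≃ₗ[Fq] U) (v w x : U)
    (h : ∃ (β : Fq) (r : ℕ), β ≠ 0 ∧ w = β • (g ^ r) v)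
    (h' : ∃ (β : Fq) (r : ℕ), β ≠ 0 ∧ x = β • (g ^ r) w) :
    ∃ (β : Fq) (r : ℕ), β ≠ 0 ∧ x = β • (g ^ r) v := by
  obtain ⟨β, r, hβ, rfl⟩ := h
  obtain ⟨γ, s, hγ, rfl⟩ := h'
  exact ⟨γ * β, s + r, mul_ne_zero hγ hβ, by
    rw [map_smul, smul_smul, pow_add, LinearEquiv.mul_apply]⟩

lemma weilVec_ne_zero [Fintype Fq] (q : ℕ) (hcard : Fintype.card Fq = q) (α : Fq) (lam : ℂ) (j : ℕ)
    (h0 : α ≠ 0) (hα : ∀ x : Fq, x ≠ 0 → ∃ i : ℕ, x = α ^ i) (w : U) (hw : w ≠ 0) :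
    weilVec q α lam j w ≠ 0 := by
  classical
  have hq : 2 ≤ q := hcard ▸ Fintype.one_lt_card
  have ho : orderOf (Units.mk0 α h0) = q - 1 := by
    rw [orderOf_eq_card_of_forall_mem_zpowers, Nat.card_eq_fintype_card, Fintype.card_units, hcard]
    intro x
    obtain ⟨i, hi⟩ := hα x x.ne_zero
    exact ⟨i, by ext; simp [hi]⟩
  intro h
  have h' := DFunLike.congr_fun h w
  unfold weilVec at h'
  rw [Finsupp.finsetSum_apply, Finset.sum_eq_single 0] at h'
  · simp at h'
  · intro i hi hi0
    have : α ^ i • w ≠ w := by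
      intro e
      have e1 : α ^ i = 1 := by
        have : (α ^ i - 1) • w = 0 := by rw [sub_smul, e, one_smul, sub_self]
        rcases smul_eq_zero.1 this with h | h
        · exact sub_eq_zero.1 h
        · exact absurd h hw
      have e2 : (Units.mk0 α h0) ^ i = 1 := by ext; simpa using e1
      have := Nat.le_of_dvd (Nat.pos_of_ne_zero hi0) (orderOf_dvd_of_pow_eq_one e2)
      have := Finset.mem_range.1 hi
      omega
    simp [Finsupp.single_apply, this]
  · intro h; exact absurd (Finset.mem_range.2 (by omega)) h

lemma main_aux [Fintype Fq] [Finite U] (q : ℕ) (hcard : Fintype.card Fq = q) (α : Fq) (h0 : α ≠ 0)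
    (hα : ∀ x : Fq, x ≠ 0 → ∃ i : ℕ, x = α ^ i)
    (lam : ℂ) (hlam : IsPrimitiveRoot lam (q - 1))
    (g : U ≃ₗ[Fq] U) (j : ℕ) (v w : U) (hw : w ≠ 0) :
    ((∃ (β : Fq) (r : ℕ), β ≠ 0 ∧ w = β • (g ^ r) v)
        ↔ cycSub q α lam j g v = cycSub q α lam j g w)
    ∧ (¬ (∃ (β : Fq) (r : ℕ), β ≠ 0 ∧ w = β • (g ^ r) v)
        → cycSub q α lam j g v ⊓ cycSub q α lam j g w = ⊥) := by
  have hq : 2 ≤ q := hcard ▸ Fintype.one_lt_card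
  have hl : lam ≠ 0 := hlam.ne_zero (by omega)
  have h1 : α ^ (q - 1) = 1 := by rw [← hcard]; exact FiniteField.pow_card_sub_one_eq_one α h0
  have h2 := hlam.pow_eq_one
  have hdis : ¬ (∃ (β : Fq) (r : ℕ), β ≠ 0 ∧ w = β • (g ^ r) v)
        → cycSub q α lam j g v ⊓ cycSub q α lam j g w = ⊥ := by
    intro hn
    refine eq_bot_iff.2 fun f hf => ?_
    have a := (Finsupp.mem_supported ℂ f).1 (cycSub_le_supported q α lam j h0 g v hf.1)
    have b := (Finsupp.mem_supported ℂ f).1 (cycSub_le_supported q α lam j h0 g w hf.2)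
    rw [Submodule.mem_bot]
    ext x
    by_contra hx
    have hx' : x ∈ (f.support : Set U) := by simpa using hx
    exact hn (rel_trans g v x w (a hx') (rel_symm g w x (b hx')))
  refine ⟨⟨fun h => le_antisymm ?_ ?_, fun h => ?_⟩, hdis⟩
  · exact cycSub_le q α lam j hl h1 h2 hα g w v (rel_symm g v w h)
  · exact cycSub_le q α lam j hl h1 h2 hα g v w h
  · by_contra hn
    have := hdis hn
    rw [h, inf_idem] at this
    have m := weilVec_mem_cycSub q α lam j g 0 w
    rw [this, Submodule.mem_bot] at m
    exact weilVec_ne_zero q hcard α lam j h0 hα w hw (by simpa using m)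

end aux

theorem statement1 (p q : ℕ) (hp : p.Prime) (κ : ℕ) (hκ : 0 < κ) (hq : q = p ^ κ)
    (Fq : Type*) [Field Fq] [Fintype Fq] (hcard : Fintype.card Fq = q)
    (α : Fq) (hα : ∀ x : Fq, x ≠ 0 → ∃ i : ℕ, x = α ^ i)
    (lam : ℂ) (hlam : IsPrimitiveRoot lam (q - 1))
    (U : Type*) [AddCommGroup U] [Module Fq U] [Module.Finite Fq U] [Nontrivial U]
    (g : U ≃ₗ[Fq] U) (j : ℕ) (hj : j ≤ q - 2)
    (v w : U) (hv : v ≠ 0) (hw : w ≠ 0) :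
    ((∃ (β : Fq) (r : ℕ), β ≠ 0 ∧ w = β • (g ^ r) v)
        ↔ cycSub q α lam j g v = cycSub q α lam j g w)
    ∧ (¬ (∃ (β : Fq) (r : ℕ), β ≠ 0 ∧ w = β • (g ^ r) v)
        → cycSub q α lam j g v ⊓ cycSub q α lam j g w = ⊥) := by
  haveI : Finite U := Module.finite_of_finite Fq
  by_cases h0 : α = 0
  · have hx : ∀ x : Fq, x ≠ 0 → x = 1 := by
      intro x hx
      obtain ⟨i, hi⟩ := hα x hx
      rcases Nat.eq_zero_or_pos i with h | h
      · simpa [h] using hi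
      · rw [h0, zero_pow (by omega)] at hi; exact absurd hi hx
    have hq2 : q ≤ 2 := by
      classical
      rw [← hcard, ← Finset.card_univ]
      refine (Finset.card_le_card (t := {0, 1}) fun x _ => ?_).trans Finset.card_le_two
      by_cases h : x = 0
      · simp [h]
      · simp [hx x h]
    have hW : ∀ u : U, weilVec q α lam j u = weilVec q (1 : Fq) lam j u := by
      intro u
      refine Finset.sum_congr rfl fun i hi => ?_
      have : i = 0 := by have := Finset.mem_range.1 hi; omega
      simp [this]
    have hC : ∀ u : U, cycSub q α lam j g u = cycSub q (1 : Fq) lam j g u := by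
      intro u; simp only [cycSub, hW]
    rw [hC, hC]
    exact main_aux q hcard 1 one_ne_zero (fun x h => ⟨0, by simp [hx x h]⟩) lam hlam g j v w hw
  · exact main_aux q hcard α h0 hα lam hlam g j v w hw
end

section
/- Let U be a nonzero finite-dimensional F_q-vector space, g ∈ GL(U) and j ∈ {0,…,q−2}. If S ⊆ U \ {0} contains exactly one representative of each ∼_g-equivalence class, then W_j(U) is the internal direct sum of the subspaces W_j(g;v) for v ∈ S. -/
/-- The submodule `W_j(U)`, the ℂ-span of the vectors `u^{(j)}` for `u ≠ 0`. -/
noncomputable def weilSub (Fq : Type*) {U : Type*} [Field Fq] [AddCommGroup U] [Module Fq U]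
    (q : ℕ) (α : Fq) (lam : ℂ) (j : ℕ) : Submodule ℂ (U →₀ ℂ) :=
  Submodule.span ℂ (weilVec (Fq := Fq) q α lam j '' {u : U | u ≠ 0})

theorem weilVec_map {Fq U : Type*} [Field Fq] [AddCommGroup U] [Module Fq U]
    (q : ℕ) (α : Fq) (lam : ℂ) (j : ℕ) (g : U ≃ₗ[Fq] U) (u : U) (r : ℕ) :
    ((Finsupp.lmapDomain ℂ ℂ ⇑g) ^ r) (weilVec q α lam j u)
      = weilVec q α lam j ((g ^ r) u) := by
  induction r with
  | zero => simp
  | succ r ih =>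
    rw [pow_succ', Module.End.mul_apply, ih, pow_succ', LinearEquiv.mul_apply]
    simp only [weilVec, map_sum, map_smul, Finsupp.lmapDomain_apply, Finsupp.mapDomain_single]

theorem weilVec_alpha {Fq U : Type*} [Field Fq] [AddCommGroup U] [Module Fq U]
    (q : ℕ) (α : Fq) (lam : ℂ) (j : ℕ) (hα : α ^ (q - 1) = 1) (hl : lam ^ (q - 1) = 1)
    (hl0 : lam ≠ 0) (u : U) :
    weilVec q α lam j (α • u) = lam ^ j • weilVec q α lam j u := by
  have h1 := Finset.sum_range_succ'
    (fun i => (lam ^ (i * j))⁻¹ • Finsupp.single ((α ^ i) • u) (1 : ℂ)) (q - 1)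
  rw [Finset.sum_range_succ] at h1
  simp only [pow_mul, hl, hα, one_pow, pow_zero, add_left_inj] at h1
  simp only [weilVec, pow_mul]
  rw [h1, Finset.smul_sum]
  refine Finset.sum_congr rfl fun i _ => ?_
  rw [smul_smul, smul_smul, ← pow_succ, pow_succ lam, mul_pow]
  congr 1
  have := pow_ne_zero j hl0
  have := pow_ne_zero j (pow_ne_zero i hl0)
  field_simp

theorem weilVec_pow {Fq U : Type*} [Field Fq] [AddCommGroup U] [Module Fq U]
    (q : ℕ) (α : Fq) (lam : ℂ) (j : ℕ) (hα : α ^ (q - 1) = 1) (hl : lam ^ (q - 1) = 1)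
    (hl0 : lam ≠ 0) (u : U) (k : ℕ) :
    weilVec q α lam j (α ^ k • u) = (lam ^ j) ^ k • weilVec q α lam j u := by
  induction k with
  | zero => simp
  | succ k ih =>
    rw [pow_succ', mul_smul, weilVec_alpha q α lam j hα hl hl0, ih, smul_smul, ← pow_succ']

theorem statement2 (p q : ℕ) (hp : p.Prime) (κ : ℕ) (hκ : 0 < κ) (hq : q = p ^ κ)
    (Fq : Type*) [Field Fq] [Fintype Fq] (hcard : Fintype.card Fq = q)
    (α : Fq) (hα : ∀ x : Fq, x ≠ 0 → ∃ i : ℕ, x = α ^ i)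
    (lam : ℂ) (hlam : IsPrimitiveRoot lam (q - 1))
    (U : Type*) [AddCommGroup U] [Module Fq U] [Module.Finite Fq U] [Nontrivial U]
    (g : U ≃ₗ[Fq] U) (j : ℕ) (hj : j ≤ q - 2)
    (S : Set U) (hS0 : ∀ v ∈ S, v ≠ 0)
    (hS : ∀ u : U, u ≠ 0 →
      ∃! w, w ∈ S ∧ ∃ (β : Fq) (r : ℕ), β ≠ 0 ∧ u = β • (g ^ r) w) :
    iSupIndep (fun v : S => cycSub q α lam j g (v : U))
    ∧ (⨆ v : S, cycSub q α lam j g (v : U)) = weilSub Fq q α lam j := by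
  classical
  have hq2 : 2 ≤ q := by
    rw [← hcard]; exact Fintype.one_lt_card
  have hl1 : lam ^ (q - 1) = 1 := hlam.pow_eq_one
  have hl0 : lam ≠ 0 := hlam.ne_zero (by omega)
  have hαq : α ≠ 0 → α ^ (q - 1) = 1 := fun h => by
    rw [← hcard]; exact FiniteField.pow_card_sub_one_eq_one α h
  -- the scalars occurring in the Weil vectors are nonzero
  have hαi : ∀ i ∈ Finset.range (q - 1), α ^ i ≠ 0 := by
    intro i hi
    by_cases h : α = 0
    · have hle : Fintype.card Fq ≤ 2 := by
        have hsub : (Finset.univ : Finset Fq) ⊆ {0, 1} := by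
          intro x _
          by_cases hx : x = 0
          · simp [hx]
          · obtain ⟨k, hk⟩ := hα x hx
            rcases Nat.eq_zero_or_pos k with rfl | hk0
            · simp [hk]
            · rw [h, zero_pow hk0.ne'] at hk
              exact absurd hk hx
        exact (Finset.card_le_card hsub).trans Finset.card_le_two
      have : i = 0 := by
        rw [Finset.mem_range] at hi
        omega
      simp [this]
    · exact pow_ne_zero _ h
  have hscal : ∀ (β : Fq) (u : U), β ≠ 0 →
      ∃ c : ℂ, weilVec q α lam j (β • u) = c • weilVec q α lam j u := by
    intro β u hβ
    obtain ⟨k, rfl⟩ := hα β hβ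
    rcases Nat.eq_zero_or_pos k with rfl | hk0
    · exact ⟨1, by simp⟩
    · have h0 : α ≠ 0 := by
        rintro rfl
        exact hβ (zero_pow hk0.ne')
      exact ⟨_, weilVec_pow q α lam j (hαq h0) hl1 hl0 u k⟩
  have hgne : ∀ (v : U) (r : ℕ), v ≠ 0 → (g ^ r) v ≠ 0 := by
    intro v r hv
    exact (LinearEquiv.map_ne_zero_iff (g ^ r)).2 hv
  let C : S → Set U := fun v => {u | ∃ (β : Fq) (r : ℕ), β ≠ 0 ∧ u = β • (g ^ r) (v : U)}
  have hC : ∀ v : S, cycSub q α lam j g (v : U) ≤ Finsupp.supported ℂ ℂ (C v) := by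
    intro v
    refine Submodule.span_le.2 ?_
    rintro _ ⟨r, rfl⟩
    simp only [weilVec_map, SetLike.mem_coe]
    refine Submodule.sum_mem _ fun i hi => Submodule.smul_mem _ _ ?_
    exact Finsupp.single_mem_supported ℂ _ ⟨α ^ i, r, hαi i hi, rfl⟩
  refine ⟨?_, le_antisymm ?_ ?_⟩
  · intro v
    have hle : (⨆ (w : S) (_ : w ≠ v), cycSub q α lam j g (w : U))
        ≤ Finsupp.supported ℂ ℂ (⋃ (w : S) (_ : w ≠ v), C w) := by
      refine iSup₂_le fun w hw => (hC w).trans (Finsupp.supported_mono ?_)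
      exact Set.subset_iUnion₂ (s := fun (w : S) (_ : w ≠ v) => C w) w hw
    refine Disjoint.mono (hC v) hle (Finsupp.disjoint_supported_supported ?_)
    rw [Set.disjoint_left]
    intro u hu hu'
    simp only [Set.mem_iUnion] at hu'
    obtain ⟨w, hw, hu'⟩ := hu'
    have hu0 : u ≠ 0 := by
      obtain ⟨β, r, hβ, rfl⟩ := hu
      exact smul_ne_zero hβ (hgne _ r (hS0 v v.2))
    exact hw (Subtype.ext ((hS u hu0).unique ⟨w.2, hu'⟩ ⟨v.2, hu⟩))
  · refine iSup_le fun v => Submodule.span_le.2 ?_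
    rintro _ ⟨r, rfl⟩
    simp only [weilVec_map]
    exact Submodule.subset_span ⟨_, hgne _ r (hS0 v v.2), rfl⟩
  · refine Submodule.span_le.2 ?_
    rintro _ ⟨u, hu, rfl⟩
    obtain ⟨w, ⟨hw, β, r, hβ, rfl⟩, -⟩ := hS u hu
    obtain ⟨c, hc⟩ := hscal β ((g ^ r) w) hβ
    rw [hc]
    refine Submodule.smul_mem _ _ ?_
    refine le_iSup (fun v : S => cycSub q α lam j g (v : U)) ⟨w, hw⟩ ?_
    exact Submodule.subset_span ⟨r, weilVec_map q α lam j g w r⟩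
end

section
/- Let U be a nonzero finite-dimensional F_q-vector space, g ∈ GL(U), j ∈ {0,…,q−2}, and v ∈ U \ {0}. Then dim_ℂ W_j(g;v) = s_v, the subspace W_j(g;v) is stable under g, and the action of g on W_j(g;v) is diagonalizable with simple spectrum: its eigenvalues, each of multiplicity one, are precisely the s_v complex numbers η satisfying η^{s_v} = λ^{t_v·j}. -/
theorem cyc_general {V : Type*} [AddCommGroup V] [Module ℂ V] (f : Module.End ℂ V) (w : V)
    (s : ℕ) (hs : 0 < s) (c : ℂ) (hc : c ≠ 0)
    (hspan : Submodule.span ℂ (Set.range fun i : ℕ => (f ^ i) w) = ⊤)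
    (hf : (f ^ s) w = c • w)
    (hli : LinearIndependent ℂ (fun i : Fin s => (f ^ (i : ℕ)) w)) :
    Module.finrank ℂ V = s ∧
    (∀ η : ℂ, Module.End.HasEigenvalue f η ↔ η ^ s = c) ∧
    (∀ η : ℂ, η ^ s = c → Module.finrank ℂ ↥(Module.End.eigenspace f η) = 1) ∧
    (⨆ η : ℂ, Module.End.eigenspace f η) = ⊤ := by
  have hfs : f ^ s = c • (1 : Module.End ℂ V) := by
    apply LinearMap.ext_on_range hspan
    intro i
    rw [← Module.End.mul_apply, ← pow_add, add_comm, pow_add, Module.End.mul_apply, hf]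
    simp
  have hspan2 : ⊤ ≤ Submodule.span ℂ (Set.range fun i : Fin s => (f ^ (i : ℕ)) w) := by
    rw [← hspan, Submodule.span_le]
    rintro _ ⟨i, rfl⟩
    simp only [SetLike.mem_coe]
    rw [← Nat.mod_add_div i s, pow_add, pow_mul, hfs, smul_pow, one_pow]
    simp only [Module.End.mul_apply, LinearMap.smul_apply, Module.End.one_apply, map_smul]
    exact Submodule.smul_mem _ _ (Submodule.subset_span ⟨⟨i % s, Nat.mod_lt _ hs⟩, rfl⟩)
  let b := Module.Basis.mk hli hspan2
  have hfr : Module.finrank ℂ V = s := by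
    rw [Module.finrank_eq_card_basis b, Fintype.card_fin]
  have : FiniteDimensional ℂ V := b.finiteDimensional_of_finite
  have hev : ∀ η : ℂ, Module.End.HasEigenvalue f η ↔ η ^ s = c := by
    intro η
    constructor
    · intro h
      obtain ⟨x, hx⟩ := h.exists_hasEigenvector
      have h1 := hx.pow_apply s
      rw [hfs] at h1
      have h2 : (η ^ s - c) • x = 0 := by
        rw [sub_smul, ← h1]; simp
      rcases smul_eq_zero.1 h2 with h3 | h3
      · exact sub_eq_zero.1 h3
      · exact absurd h3 hx.2
    · intro h
      have hη : η ≠ 0 := by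
        rintro rfl
        rw [zero_pow hs.ne'] at h
        exact hc h.symm
      apply Module.End.hasEigenvalue_of_hasEigenvector
        (x := ∑ i ∈ Finset.range s, (η⁻¹) ^ i • (f ^ i) w)
      constructor
      · rw [Module.End.mem_eigenspace_iff, map_sum]
        have h1 : ∀ i, f (η⁻¹ ^ i • (f ^ i) w) = η • (η⁻¹ ^ (i+1) • (f ^ (i+1)) w) := by
          intro i
          rw [map_smul, smul_smul, pow_succ' f, Module.End.mul_apply, pow_succ', ← mul_assoc,
            mul_inv_cancel₀ hη, one_mul]
        simp only [h1]
        rw [← Finset.smul_sum]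
        congr 1
        have h2 := Finset.sum_range_succ (fun i => (η⁻¹) ^ i • (f ^ i) w) s
        rw [Finset.sum_range_succ'] at h2
        have h3 : η⁻¹ ^ s • (f ^ s) w = η⁻¹ ^ 0 • (f ^ 0) w := by
          rw [hf, smul_smul, ← h, ← mul_pow, inv_mul_cancel₀ hη]; simp
        simp only [h3] at h2
        exact add_right_cancel h2
      · intro h0
        rw [← Fin.sum_univ_eq_sum_range (fun i => η⁻¹ ^ i • (f ^ i) w)] at h0
        have := Fintype.linearIndependent_iff.1 hli (fun i => η⁻¹ ^ (i : ℕ)) h0 ⟨0, hs⟩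
        simp at this
  refine ⟨hfr, hev, ?_, ?_⟩
  · intro η h
    have hpos : 0 < Module.finrank ℂ ↥(Module.End.eigenspace f η) := by
      have := (hev η).2 h
      rw [Module.finrank_pos_iff, Submodule.nontrivial_iff_ne_bot]
      exact this
    have hle : Module.finrank ℂ ↥(Module.End.eigenspace f η) ≤ 1 := by
      have hk : Module.End.eigenspace f η = LinearMap.ker (f - η • (1 : Module.End ℂ V)) := by
        ext x
        simp [sub_eq_zero]
      rw [hk]
      have h1 := LinearMap.finrank_range_add_finrank_ker (f - η • (1 : Module.End ℂ V))
      have htop : LinearMap.range (f - η • (1 : Module.End ℂ V)) ⊔ Submodule.span ℂ {w} = ⊤ := by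
        rw [eq_top_iff, ← hspan, Submodule.span_le]
        rintro _ ⟨i, rfl⟩
        simp only [SetLike.mem_coe]
        induction i with
        | zero =>
          exact Submodule.mem_sup_right (Submodule.mem_span_singleton_self w)
        | succ i ih =>
          have : (f ^ (i+1)) w = (f - η • (1 : Module.End ℂ V)) ((f ^ i) w) + η • (f ^ i) w := by
            rw [pow_succ', Module.End.mul_apply]; simp
          rw [this]
          exact Submodule.add_mem _ (Submodule.mem_sup_left ⟨_, rfl⟩)
            (Submodule.smul_mem _ _ ih)
      have h2 := Submodule.finrank_add_le_finrank_add_finrank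
        (LinearMap.range (f - η • (1 : Module.End ℂ V))) (Submodule.span ℂ {w})
      rw [htop, finrank_top] at h2
      have h3 : Module.finrank ℂ ↥(Submodule.span ℂ {w}) ≤ 1 := by
        simpa using finrank_span_le_card (R := ℂ) ({w} : Set V)
      omega
    omega
  · have hsep : (Polynomial.X ^ s - Polynomial.C c : Polynomial ℂ).Separable :=
      Polynomial.separable_X_pow_sub_C c (by exact_mod_cast hs.ne') hc
    have hss : f.IsSemisimple := by
      apply Module.End.isSemisimple_of_squarefree_aeval_eq_zero hsep.squarefree
      simp [hfs, Algebra.algebraMap_eq_smul_one]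
    have h1 := Module.End.iSup_maxGenEigenspace_eq_top f
    simpa only [hss.isFinitelySemisimple.maxGenEigenspace_eq_eigenspace] using h1

theorem pow_weilVec {Fq U : Type*} [Field Fq] [AddCommGroup U] [Module Fq U]
    (q : ℕ) (α : Fq) (lam : ℂ) (j : ℕ) (g : U ≃ₗ[Fq] U) (v : U) (i : ℕ) :
    ((Finsupp.lmapDomain ℂ ℂ ⇑g) ^ i) (weilVec q α lam j v) = weilVec q α lam j ((g ^ i) v) := by
  induction i with
  | zero => simp
  | succ i ih =>
    rw [pow_succ', Module.End.mul_apply, ih, pow_succ']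
    simp only [weilVec, map_sum, map_smul, Finsupp.lmapDomain_apply, Finsupp.mapDomain_single]
    simp

theorem weilVec_smul {Fq U : Type*} [Field Fq] [AddCommGroup U] [Module Fq U]
    (q : ℕ) (α : Fq) (lam : ℂ) (j : ℕ) (hl : lam ≠ 0) (hα : α ^ (q - 1) = 1)
    (hlam : lam ^ (q - 1) = 1) (v : U) (t : ℕ) :
    weilVec q α lam j (α ^ t • v) = lam ^ (t * j) • weilVec q α lam j v := by
  have key : ∀ u : U, weilVec q α lam j (α • u) = lam ^ j • weilVec q α lam j u := by
    intro u
    have h1 : ∀ i, (lam ^ (i * j))⁻¹ • Finsupp.single ((α ^ i) • α • u) (1 : ℂ)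
        = lam ^ j • ((lam ^ ((i+1) * j))⁻¹ • Finsupp.single ((α ^ (i+1)) • u) (1 : ℂ)) := by
      intro i
      rw [smul_smul, smul_smul, pow_succ]
      congr 1
      field_simp
      ring
    simp only [weilVec, h1]
    rw [← Finset.smul_sum]
    congr 1
    have h2 := Finset.sum_range_succ
      (fun i => (lam ^ (i * j))⁻¹ • Finsupp.single ((α ^ i) • u) (1 : ℂ)) (q - 1)
    rw [Finset.sum_range_succ'] at h2
    have h3 : (lam ^ ((q - 1) * j))⁻¹ • Finsupp.single ((α ^ (q - 1)) • u) (1 : ℂ)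
      = (lam ^ (0 * j))⁻¹ • Finsupp.single ((α ^ 0) • u) (1 : ℂ) := by
      rw [pow_mul, hlam, hα]; simp
    rw [h3] at h2
    exact add_right_cancel h2
  induction t with
  | zero => simp
  | succ t ih =>
    rw [pow_succ', mul_smul, key, ih, smul_smul, ← pow_add]
    congr 2
    ring

theorem weilVec_apply_self {Fq U : Type*} [Field Fq] [AddCommGroup U] [Module Fq U]
    (q : ℕ) (hq : 0 < q - 1) (α : Fq) (lam : ℂ) (j : ℕ)
    (hα : ∀ i, i < q - 1 → α ^ i = 1 → i = 0) (v : U) (hv : v ≠ 0) :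
    weilVec q α lam j v v = 1 := by
  rw [weilVec, Finsupp.finsetSum_apply, Finset.sum_eq_single 0]
  · simp
  · intro i hi h0
    rw [Finsupp.smul_apply, Finsupp.single_eq_of_ne', smul_zero]
    intro h
    apply h0 (hα i (Finset.mem_range.1 hi) _)
    have : (α ^ i - 1) • v = 0 := by rw [sub_smul, h]; simp
    exact sub_eq_zero.1 ((smul_eq_zero.1 this).resolve_right hv)
  · intro h
    exact absurd (Finset.mem_range.2 hq) h

theorem weilVec_apply_ne {Fq U : Type*} [Field Fq] [AddCommGroup U] [Module Fq U]
    (q : ℕ) (α : Fq) (lam : ℂ) (j : ℕ) (u v : U) (h : ∀ i : ℕ, α ^ i • u ≠ v) :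
    weilVec q α lam j u v = 0 := by
  rw [weilVec, Finsupp.finsetSum_apply]
  apply Finset.sum_eq_zero
  intro i _
  rw [Finsupp.smul_apply, Finsupp.single_eq_of_ne' (h i), smul_zero]


theorem statement3 (p q : ℕ) (hp : p.Prime) (κ : ℕ) (hκ : 0 < κ) (hq : q = p ^ κ)
    (Fq : Type*) [Field Fq] [Fintype Fq] (hcard : Fintype.card Fq = q)
    (α : Fq) (hα : ∀ x : Fq, x ≠ 0 → ∃ i : ℕ, x = α ^ i)
    (lam : ℂ) (hlam : IsPrimitiveRoot lam (q - 1))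
    (U : Type*) [AddCommGroup U] [Module Fq U] [Module.Finite Fq U] [Nontrivial U]
    (g : U ≃ₗ[Fq] U) (j : ℕ) (hj : j ≤ q - 2)
    (v : U) (hv : v ≠ 0)
    -- `s` is the least positive integer with `g^s v = α^t v` for some integer `t`,
    -- and `t ∈ {0, …, q-2}` is such a `t`.
    (s t : ℕ) (hs : 0 < s) (ht : t ≤ q - 2)
    (hst : (g ^ s) v = (α ^ t) • v)
    (hmin : ∀ s' : ℕ, 0 < s' → s' < s → ∀ t' : ℤ, (g ^ s') v ≠ (α ^ t') • v) :
    Module.finrank ℂ ↥(cycSub q α lam j g v) = s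
    ∧ ∃ hstab : ∀ x ∈ cycSub q α lam j g v,
          Finsupp.lmapDomain ℂ ℂ ⇑g x ∈ cycSub q α lam j g v,
        (∀ η : ℂ, Module.End.HasEigenvalue
            ((Finsupp.lmapDomain ℂ ℂ ⇑g).restrict hstab) η ↔ η ^ s = lam ^ (t * j))
        ∧ (∀ η : ℂ, η ^ s = lam ^ (t * j) →
            Module.finrank ℂ
              ↥(Module.End.eigenspace
                  ((Finsupp.lmapDomain ℂ ℂ ⇑g).restrict hstab) η) = 1)
        ∧ (⨆ η : ℂ, Module.End.eigenspace
              ((Finsupp.lmapDomain ℂ ℂ ⇑g).restrict hstab) η) = ⊤ := by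
  have hq2 : 2 ≤ q := by
    rw [← hcard]; exact Fintype.one_lt_card
  have hl0 : lam ≠ 0 := hlam.ne_zero (by omega)
  -- order facts about `α`; for `q = 2` the hypothesis also allows `α = 0`
  have hord : (α = 0 ∧ q = 2) ∨ (α ≠ 0 ∧ orderOf α = q - 1) := by
    by_cases h0 : α = 0
    · left
      refine ⟨h0, ?_⟩
      have h1 : ∀ x : Fq, x ∈ ({0, 1} : Set Fq) := by
        intro x
        by_cases hx : x = 0
        · left; exact hx
        · right
          obtain ⟨i, hi⟩ := hα x hx
          rcases Nat.eq_zero_or_pos i with rfl | hi0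
          · simpa using hi
          · rw [h0, zero_pow hi0.ne'] at hi
            exact absurd hi hx
      have h2 : (Set.univ : Set Fq) ⊆ {0, 1} := fun x _ => h1 x
      have h3 := Set.ncard_le_ncard h2 (Set.toFinite _)
      rw [Set.ncard_univ, Nat.card_eq_fintype_card, hcard, Set.ncard_pair zero_ne_one] at h3
      omega
    · right
      refine ⟨h0, ?_⟩
      have h1 : ∀ x : Fqˣ, x ∈ Subgroup.zpowers (Units.mk0 α h0) := by
        intro x
        obtain ⟨i, hi⟩ := hα x x.ne_zero
        refine ⟨(i : ℤ), ?_⟩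
        ext
        simp [hi]
      have h2 := orderOf_eq_card_of_forall_mem_zpowers h1
      rw [Nat.card_units, Nat.card_eq_fintype_card, hcard, ← orderOf_units] at h2
      exact h2
  have hα1 : ∀ i, i < q - 1 → α ^ i = 1 → i = 0 := by
    intro i hi h
    rcases hord with ⟨_, h2⟩ | ⟨_, h2⟩
    · omega
    · exact Nat.eq_zero_of_dvd_of_lt (h2 ▸ orderOf_dvd_of_pow_eq_one h) hi
  have hshift : weilVec q α lam j (α ^ t • v) = lam ^ (t * j) • weilVec q α lam j v := by
    rcases hord with ⟨_, h2⟩ | ⟨_, h2⟩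
    · have : t = 0 := by omega
      subst this
      simp
    · exact weilVec_smul q α lam j hl0 (h2 ▸ pow_orderOf_eq_one α) hlam.pow_eq_one v t
  have hgv : ∀ i : ℕ, (g ^ i) v ≠ 0 := by
    intro i h
    exact hv ((g ^ i).map_eq_zero_iff.1 h)
  have hne : ∀ i k : ℕ, i < s → k < s → i ≠ k → ∀ m : ℕ, α ^ m • (g ^ i) v ≠ (g ^ k) v := by
    intro i k hi hk hik m h
    have hm : α ^ m ≠ 0 := by
      intro h0
      rw [h0, zero_smul] at h
      exact hgv k h.symm
    rcases lt_or_gt_of_ne hik with hlt | hlt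
    · apply hmin (k - i) (by omega) (by omega) m
      apply (g ^ i).injective
      rw [zpow_natCast, map_smul, h, ← LinearEquiv.mul_apply, ← pow_add]
      congr 2
      omega
    · apply hmin (i - k) (by omega) (by omega) (-(m : ℤ))
      apply (g ^ k).injective
      rw [zpow_neg, zpow_natCast, map_smul, ← h, smul_smul, inv_mul_cancel₀ hm, one_smul,
        ← LinearEquiv.mul_apply, ← pow_add]
      congr 2
      omega
  have hli : LinearIndependent ℂ
      (fun i : Fin s => ((Finsupp.lmapDomain ℂ ℂ ⇑g) ^ (i : ℕ)) (weilVec q α lam j v)) := by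
    rw [Fintype.linearIndependent_iff]
    intro c hc k
    simp only [pow_weilVec] at hc
    have h1 := DFunLike.congr_fun hc ((g ^ (k : ℕ)) v)
    rw [Finsupp.finsetSum_apply, Finset.sum_eq_single k] at h1
    · rw [Finsupp.smul_apply, weilVec_apply_self q (by omega) α lam j hα1 _ (hgv _)] at h1
      simpa using h1
    · intro i _ hik
      rw [Finsupp.smul_apply, weilVec_apply_ne, smul_zero]
      exact hne i k i.2 k.2 (fun h => hik (Fin.ext h))
    · intro h
      exact absurd (Finset.mem_univ k) h
  have hstab : ∀ x ∈ cycSub q α lam j g v,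
      Finsupp.lmapDomain ℂ ℂ ⇑g x ∈ cycSub q α lam j g v := by
    intro x hx
    unfold cycSub at hx ⊢
    induction hx using Submodule.span_induction with
    | mem x h =>
      obtain ⟨i, rfl⟩ := h
      apply Submodule.subset_span
      refine ⟨i + 1, ?_⟩
      simp only [pow_succ', Module.End.mul_apply]
    | zero => rw [map_zero]; exact Submodule.zero_mem _
    | add x y _ _ h1 h2 => rw [map_add]; exact Submodule.add_mem _ h1 h2
    | smul a x _ h => rw [map_smul]; exact Submodule.smul_mem _ _ h
  have hw : weilVec q α lam j v ∈ cycSub q α lam j g v :=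
    Submodule.subset_span ⟨0, by simp⟩
  have hpow : ∀ i : ℕ, (cycSub q α lam j g v).subtype
      ((((Finsupp.lmapDomain ℂ ℂ ⇑g).restrict hstab) ^ i) ⟨_, hw⟩)
      = ((Finsupp.lmapDomain ℂ ℂ ⇑g) ^ i) (weilVec q α lam j v) := by
    intro i
    induction i with
    | zero => rfl
    | succ i ih =>
      rw [pow_succ', pow_succ', Module.End.mul_apply, Module.End.mul_apply, ← ih]
      rfl
  have main := cyc_general ((Finsupp.lmapDomain ℂ ℂ ⇑g).restrict hstab) ⟨_, hw⟩ s hs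
    (lam ^ (t * j)) (pow_ne_zero _ hl0) ?_ ?_ ?_
  · exact ⟨main.1, hstab, main.2⟩
  · apply Submodule.map_injective_of_injective (cycSub q α lam j g v).injective_subtype
    rw [Submodule.map_span, ← Set.range_comp, Submodule.map_top, Submodule.range_subtype]
    unfold cycSub
    congr 2
    funext i
    exact hpow i
  · apply (cycSub q α lam j g v).injective_subtype
    rw [hpow, pow_weilVec, hst, hshift]
    rfl
  · apply LinearIndependent.of_comp (cycSub q α lam j g v).subtype
    convert hli using 1
    funext i
    exact hpow i
end

section
/- Let ψ₀ be a nontrivial additive character of F_p and set ψ := ψ₀ ∘ Tr_{K/F_p}. Assume bC − cB = 1. Then for every u ∈ K^×: ∑_{x ∈ K} ∑_{z ∈ K} ∑_{y ∈ K^×} ∑_{t ∈ K^×} ψ( −t·u^{−1}·x^A·y^{−B} + t·z^C + x − y − z ) = (#K)² · ( −1 + #{ v ∈ K^× : u^{−b}·v^B + u^{c·q^m}·v^{−C·q^m} = 1 } ). -/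
/-- An additive character of `A` with values in `ℂ`. -/
def IsAddCharFn {A : Type*} [AddGroup A] (φ : A → ℂ) : Prop :=
  φ 0 = 1 ∧ ∀ a b : A, φ (a + b) = φ a * φ b

theorem sum_units_eq {K : Type*} [Field K] [Fintype K] [DecidableEq K] (f : K → ℂ) :
    ∑ x : K, f x = f 0 + ∑ x : Kˣ, f (x : K) := by
  rw [← Finset.add_sum_erase _ f (Finset.mem_univ (0 : K))]
  congr 1
  symm
  refine Finset.sum_bij (fun (x : Kˣ) _ => (x : K)) ?_ ?_ ?_ ?_
  · intro a _
    simp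
  · intro a _ b _ h
    exact Units.ext h
  · intro b hb
    have hb' : b ≠ 0 := by simpa using hb
    exact ⟨Units.mk0 b hb', Finset.mem_univ _, rfl⟩
  · intro a _
    rfl

theorem sum_units_mul {K : Type*} [Field K] [Fintype K] [DecidableEq K]
    (ψ : AddChar K ℂ) (hψ : ψ ≠ 1) (s : K) :
    ∑ t : Kˣ, ψ ((t : K) * s) = (if s = 0 then (Fintype.card K : ℂ) else 0) - 1 := by
  have h := AddChar.sum_mulShift s (AddChar.IsPrimitive.of_ne_one hψ)
  rw [sum_units_eq (fun x => ψ (x * s))] at h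
  simp only [zero_mul, AddChar.map_zero_eq_one] at h
  rw [eq_sub_iff_add_eq, add_comm, h]
  push_cast
  rfl

theorem param_sum {G : Type*} [CommGroup G] [Fintype G] [DecidableEq G] (B C : ℕ) (b c : ℤ)
    (hbc : b * (C : ℤ) - c * (B : ℤ) = 1) (u : G) (F : G → G → ℂ) :
    ∑ Z : G, ∑ Y : G, (if Z ^ C * Y ^ B = u⁻¹ then F Z Y else 0)
      = ∑ w : G, F (u ^ (-b) * w ^ B) (u ^ c * (w ^ C)⁻¹) := by
  rw [← Fintype.sum_prod_type' (f := fun Z Y => if Z ^ C * Y ^ B = u⁻¹ then F Z Y else 0),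
    ← Finset.sum_filter]
  symm
  refine Finset.sum_nbij' (fun w => (u ^ (-b) * w ^ B, u ^ c * (w ^ C)⁻¹))
    (fun P => P.1 ^ (-c) * P.2 ^ (-b)) ?_ ?_ ?_ ?_ ?_
  · intro w _
    simp only [Finset.mem_filter, Finset.mem_univ, true_and]
    simp only [← zpow_natCast, ← zpow_neg, mul_zpow, ← zpow_mul]
    have : ∀ a1 a2 a3 a4 : ℤ, u ^ a1 * w ^ a2 * (u ^ a3 * w ^ a4) = u ^ (a1 + a3) * w ^ (a2 + a4) := by
      intros
      rw [zpow_add, zpow_add, mul_mul_mul_comm]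
    rw [this, show -b * (C : ℤ) + c * B = -1 by linarith, show (B : ℤ) * C + -(C : ℤ) * B = 0 by ring]
    simp
  · intro _ _
    simp
  · intro w _
    simp only [← zpow_natCast, ← zpow_neg, mul_zpow, ← zpow_mul]
    have : ∀ a1 a2 a3 a4 : ℤ, u ^ a1 * w ^ a2 * (u ^ a3 * w ^ a4) = u ^ (a1 + a3) * w ^ (a2 + a4) := by
      intros
      rw [zpow_add, zpow_add, mul_mul_mul_comm]
    rw [this, show -b * -c + c * -b = 0 by ring, show (B : ℤ) * -c + -(C : ℤ) * -b = 1 by linarith]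
    simp
  · rintro ⟨Z, Y⟩ h
    simp only [Finset.mem_filter, Finset.mem_univ, true_and] at h
    have hu : u = (Z ^ (C : ℤ) * Y ^ (B : ℤ))⁻¹ := by
      rw [zpow_natCast, zpow_natCast, h, inv_inv]
    have key : ∀ a1 a2 a3 a4 : ℤ, Z ^ a1 * Y ^ a2 * (Z ^ a3 * Y ^ a4) = Z ^ (a1 + a3) * Y ^ (a2 + a4) := by
      intros
      rw [zpow_add, zpow_add, mul_mul_mul_comm]
    rw [hu]
    simp only [← zpow_natCast, ← zpow_neg_one (_ * _), mul_zpow, ← zpow_mul]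
    rw [key, key,
      show (C : ℤ) * -1 * -b + -c * B = 1 by linarith,
      show (B : ℤ) * -1 * -b + -b * B = 0 by ring,
      show (C : ℤ) * -1 * c + -c * C * -1 = 0 by ring,
      show (B : ℤ) * -1 * c + -b * C * -1 = 1 by linarith]
    simp
  · intro _ _
    rfl

theorem core_sum {K : Type*} [Field K] [Fintype K] [DecidableEq K]
    (ψ : AddChar K ℂ) (hψ : ψ ≠ 1) (A B C Q : ℕ) (hC : C ≠ 0) (hA : A = B + C * Q)
    (hA0 : A ≠ 0) (hinv : ∀ a : K, ψ (a ^ Q) = ψ a)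
    (hinj : Function.Injective (fun a : Kˣ => a ^ Q)) (b c : ℤ)
    (hbc : b * (C : ℤ) - c * (B : ℤ) = 1) (u : Kˣ) :
    ∑ x : K, ∑ z : K, ∑ y : Kˣ, ∑ t : Kˣ,
      ψ ((t : K) * (z ^ C - (u : K)⁻¹ * x ^ A * ((y : K) ^ B)⁻¹) + (x - (y : K) - z))
      = (Fintype.card K : ℂ) ^ 2 *
        (-1 + (Fintype.card {v : Kˣ // ((u ^ (-b) * v ^ B : Kˣ) : K)
          + ((u ^ c * (v ^ C)⁻¹ : Kˣ) : K) ^ Q = 1} : ℂ)) := by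
  set N : ℂ := (Fintype.card K : ℂ) with hN
  have hcardU : (Fintype.card Kˣ : ℂ) = N - 1 := by
    have h := sum_units_eq (K := K) (fun _ => 1)
    simp at h
    rw [hN, h]
    ring
  have h1 : ∀ x z : K, ∀ y : Kˣ, ∑ t : Kˣ,
      ψ ((t : K) * (z ^ C - (u : K)⁻¹ * x ^ A * ((y : K) ^ B)⁻¹) + (x - (y : K) - z))
      = (if z ^ C = (u : K)⁻¹ * x ^ A * ((y : K) ^ B)⁻¹ then N * ψ (x - y - z) else 0)
        - ψ x * ψ (- y - z) := by
    intro x z y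
    simp only [AddChar.map_add_eq_mul]
    rw [← Finset.sum_mul, sum_units_mul ψ hψ]
    simp only [sub_eq_zero]
    rw [← AddChar.map_add_eq_mul ψ x, show x + (-(y : K) - z) = x - y - z by ring]
    split_ifs <;> ring
  simp only [h1, Finset.sum_sub_distrib]
  have h0 : ∑ x : K, ψ x = 0 := by
    exact AddChar.sum_eq_zero_of_ne_one hψ
  simp only [← Finset.mul_sum]
  rw [← Finset.sum_mul, h0, zero_mul, sub_zero]
  rw [sum_units_eq]
  have hx0 : ∑ z : K, ∑ y : Kˣ, (if z ^ C = (u : K)⁻¹ * 0 ^ A * ((y : K) ^ B)⁻¹ then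
      N * ψ (0 - y - z) else 0) = - N := by
    rw [Finset.sum_eq_single (0 : K)]
    · simp only [zero_pow hC, zero_pow hA0, mul_zero, zero_mul, if_true, sub_zero, zero_sub]
      rw [← Finset.mul_sum]
      have := sum_units_mul ψ hψ (-1)
      simp only [mul_neg, mul_one, neg_eq_zero, one_ne_zero, if_false] at this
      rw [this]
      ring
    · intro z _ hz
      apply Finset.sum_eq_zero
      intro y _
      rw [if_neg]
      simp [zero_pow hA0, hz]
    · simp
  rw [hx0]
  have hx : ∀ x : Kˣ, ∑ z : K, ∑ y : Kˣ, (if z ^ C = (u : K)⁻¹ * (x : K) ^ A * ((y : K) ^ B)⁻¹ then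
      N * ψ (x - y - z) else 0) =
      ∑ w : Kˣ, N * ψ (((x ^ Q : Kˣ) : K) * (1 - (((u ^ (-b) * w ^ B : Kˣ) : K)
          + ((u ^ c * (w ^ C)⁻¹ : Kˣ) : K) ^ Q))) := by
    intro x
    rw [sum_units_eq]
    rw [Finset.sum_eq_zero, zero_add]
    · rw [← Equiv.sum_comp (Equiv.mulRight (x ^ Q))]
      have e : ∀ Z : Kˣ, ∑ y : Kˣ, (if ((Equiv.mulRight (x ^ Q) Z : Kˣ) : K) ^ C
          = (u : K)⁻¹ * (x : K) ^ A * ((y : K) ^ B)⁻¹ then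
          N * ψ (x - y - ((Equiv.mulRight (x ^ Q) Z : Kˣ) : K)) else 0) =
          ∑ Y : Kˣ, if Z ^ C * Y ^ B = u⁻¹ then
            N * ψ (((x ^ Q : Kˣ) : K) * (1 - ((Z : K) + (Y : K) ^ Q))) else 0 := by
        intro Z
        rw [← Equiv.sum_comp (Equiv.mulRight x)]
        refine Finset.sum_congr rfl fun Y _ => ?_
        have hiff : (((Equiv.mulRight (x ^ Q) Z : Kˣ) : K) ^ C
          = (u : K)⁻¹ * (x : K) ^ A * (((Equiv.mulRight x Y : Kˣ) : K) ^ B)⁻¹) ↔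
            Z ^ C * Y ^ B = u⁻¹ := by
          simp only [Equiv.coe_mulRight]
          have hh : (((Z * x ^ Q : Kˣ) : K) ^ C
            = (u : K)⁻¹ * (x : K) ^ A * (((Y * x : Kˣ) : K) ^ B)⁻¹) ↔
            ((Z * x ^ Q) ^ C = u⁻¹ * x ^ A * ((Y * x) ^ B)⁻¹) := by
            rw [Units.ext_iff]
            push_cast
            rfl
          rw [hh, eq_mul_inv_iff_mul_eq]
          have : (Z * x ^ Q) ^ C * (Y * x) ^ B = Z ^ C * Y ^ B * x ^ A := by
            rw [hA, mul_pow, mul_pow, pow_add, mul_comm C Q, pow_mul]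
            ac_rfl
          rw [this, mul_left_inj]
        simp only [hiff]
        split_ifs with hc
        · congr 1
          simp only [Equiv.coe_mulRight, Units.val_mul, Units.val_pow_eq_pow_val]
          rw [AddChar.map_sub_eq_div, AddChar.map_sub_eq_div, ← hinv (x : K),
            ← hinv ((Y : K) * x), ← AddChar.map_sub_eq_div, ← AddChar.map_sub_eq_div]
          congr 1
          ring
        · rfl
      simp only [e]
      exact param_sum B C b c hbc u
        (fun Z Y => N * ψ (((x ^ Q : Kˣ) : K) * (1 - ((Z : K) + (Y : K) ^ Q))))
    · intro y _
      rw [if_neg]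
      simp [zero_pow hC, eq_comm]
  simp only [hx]
  rw [Finset.sum_comm]
  have hw : ∀ w : Kˣ, ∑ x : Kˣ, N * ψ (((x ^ Q : Kˣ) : K) * (1 - (((u ^ (-b) * w ^ B : Kˣ) : K)
          + ((u ^ c * (w ^ C)⁻¹ : Kˣ) : K) ^ Q))) =
      N * (if ((u ^ (-b) * w ^ B : Kˣ) : K)
          + ((u ^ c * (w ^ C)⁻¹ : Kˣ) : K) ^ Q = 1 then N else 0) - N := by
    intro w
    rw [← Finset.mul_sum]
    have hbij := Finite.injective_iff_bijective.mp hinj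
    rw [Function.Bijective.sum_comp hbij (fun x : Kˣ => ψ ((x : K) * (1 - (((u ^ (-b) * w ^ B : Kˣ) : K)
          + ((u ^ c * (w ^ C)⁻¹ : Kˣ) : K) ^ Q)))), sum_units_mul ψ hψ]
    simp only [sub_eq_zero, eq_comm (a := (1 : K))]
    ring
  simp only [hw, Finset.sum_sub_distrib, ← Finset.mul_sum, ← Finset.sum_filter,
    Finset.sum_const, Finset.card_univ, nsmul_eq_mul, hcardU, Fintype.card_subtype]
  ring

theorem statement8 (p q n m : ℕ) (hp : p.Prime) (κ : ℕ) (hκ : 0 < κ) (hq : q = p ^ κ)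
    (hm : 1 ≤ m) (hmn : m < n)
    (Fq : Type*) [Field Fq] [Fintype Fq] (hcard : Fintype.card Fq = q)
    (K : Type*) [Field K] [Fintype K] [DecidableEq K] [Algebra Fq K] [Algebra (ZMod p) K]
    (b c : ℤ)
    (hbc : b * (((q ^ (n - m) - 1) / (q - 1) : ℕ) : ℤ)
        - c * (((q ^ m - 1) / (q - 1) : ℕ) : ℤ) = 1)
    (ψ₀ : ZMod p → ℂ) (hψ₀ : IsAddCharFn ψ₀) (hψ₀nt : ∃ a, ψ₀ a ≠ 1)
    (u : K) (hu : u ≠ 0) :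
    ∑ x : K, ∑ z : K, ∑ y : Kˣ, ∑ t : Kˣ,
        ψ₀ (Algebra.trace (ZMod p) K
          (-(t : K) * u⁻¹ * x ^ ((q ^ n - 1) / (q - 1))
              * ((y : K) ^ ((q ^ m - 1) / (q - 1)))⁻¹
            + (t : K) * z ^ ((q ^ (n - m) - 1) / (q - 1)) + x - (y : K) - z))
      = (Fintype.card K : ℂ) ^ 2 *
        (-1 + (Nat.card {v : Kˣ |
            u ^ (-b) * (v : K) ^ ((((q ^ m - 1) / (q - 1) : ℕ)) : ℤ)
              + u ^ (c * ((q ^ m : ℕ) : ℤ))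
                * (v : K) ^ (-(((((q ^ (n - m) - 1) / (q - 1)) * q ^ m : ℕ)) : ℤ))
              = 1} : ℂ)) := by
  haveI : Fact p.Prime := ⟨hp⟩
  have hq2 : 2 ≤ q := by
    rw [hq]
    exact hp.two_le.trans (Nat.le_self_pow hκ.ne' p)
  have hgeom : ∀ k, (q ^ k - 1) / (q - 1) = ∑ i ∈ Finset.range k, q ^ i :=
    fun k => (Nat.geomSum_eq hq2 k).symm
  have hpos : ∀ k, k ≠ 0 → ∑ i ∈ Finset.range k, q ^ i ≠ 0 := by
    intro k hk h
    rw [Finset.sum_eq_zero_iff] at h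
    have := h 0 (Finset.mem_range.mpr (Nat.pos_of_ne_zero hk))
    simp at this
  have hsum : ∑ i ∈ Finset.range n, q ^ i = ∑ i ∈ Finset.range m, q ^ i
      + (∑ i ∈ Finset.range (n - m), q ^ i) * q ^ m := by
    conv_lhs => rw [show n = m + (n - m) by omega, Finset.sum_range_add]
    rw [Finset.sum_mul]
    simp only [pow_add, mul_comm]
  rw [hgeom, hgeom] at hbc
  simp only [hgeom]
  haveI : CharP K p := charP_of_injective_algebraMap (algebraMap (ZMod p) K).injective p
  let ψ : AddChar K ℂ :=
    { toFun := fun x => ψ₀ (Algebra.trace (ZMod p) K x)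
      map_zero_eq_one' := by rw [map_zero, hψ₀.1]
      map_add_eq_mul' := fun x y => by rw [map_add, hψ₀.2] }
  have hψapp : ∀ x, ψ₀ (Algebra.trace (ZMod p) K x) = ψ x := fun _ => rfl
  have hψ : ψ ≠ 1 := by
    obtain ⟨a, ha⟩ := hψ₀nt
    obtain ⟨x, hx⟩ := Algebra.trace_surjective (ZMod p) K a
    intro h
    apply ha
    rw [← hx, hψapp, h, AddChar.one_apply]
  have hinvp : ∀ a : K, ψ (a ^ p) = ψ a := by
    intro a
    rw [← hψapp, ← hψapp]
    congr 1
    have := Algebra.trace_eq_of_algEquiv (FiniteField.frobeniusAlgEquivOfAlgebraic (ZMod p) K) a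
    simpa [ZMod.card] using this
  have hinvk : ∀ k : ℕ, ∀ a : K, ψ (a ^ p ^ k) = ψ a := by
    intro k
    induction k with
    | zero => intro a; simp
    | succ k ih => intro a; rw [pow_succ, pow_mul, hinvp, ih]
  have hQ : q ^ m = p ^ (κ * m) := by rw [hq, pow_mul]
  have hinj : Function.Injective (fun a : Kˣ => a ^ q ^ m) := by
    intro a a' h
    apply Units.ext
    apply iterateFrobenius_inj K p (κ * m)
    simp only [iterateFrobenius_def, ← hQ]
    exact_mod_cast congrArg Units.val h
  have hmain := core_sum ψ hψ _ _ _ (q ^ m) (hpos (n - m) (by omega)) hsum (hpos n (by omega))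
    (by rw [hQ]; exact hinvk _) hinj b c hbc (Units.mk0 u hu)
  simp only [hψapp]
  have hR : ∀ v : Kˣ, (u ^ (-b) * (v : K) ^ ((∑ i ∈ Finset.range m, q ^ i : ℕ) : ℤ)
              + u ^ (c * ((q ^ m : ℕ) : ℤ))
                * (v : K) ^ (-(((∑ i ∈ Finset.range (n - m), q ^ i) * q ^ m : ℕ) : ℤ)) = 1) ↔
      (((Units.mk0 u hu ^ (-b) * v ^ (∑ i ∈ Finset.range m, q ^ i) : Kˣ) : K) +
        ((Units.mk0 u hu ^ c * (v ^ (∑ i ∈ Finset.range (n - m), q ^ i))⁻¹ : Kˣ) : K) ^ q ^ m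
          = 1) := by
    intro v
    have e1 : u ^ (-b) * (v : K) ^ ((∑ i ∈ Finset.range m, q ^ i : ℕ) : ℤ)
        = ((Units.mk0 u hu ^ (-b) * v ^ (∑ i ∈ Finset.range m, q ^ i) : Kˣ) : K) := by
      rw [zpow_natCast, Units.val_mul, Units.val_zpow_eq_zpow_val, Units.val_pow_eq_pow_val,
        Units.val_mk0]
    have e2 : u ^ (c * ((q ^ m : ℕ) : ℤ))
                * (v : K) ^ (-(((∑ i ∈ Finset.range (n - m), q ^ i) * q ^ m : ℕ) : ℤ))
        = ((Units.mk0 u hu ^ c * (v ^ (∑ i ∈ Finset.range (n - m), q ^ i))⁻¹ : Kˣ) : K)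
          ^ q ^ m := by
      rw [zpow_mul, zpow_natCast, zpow_neg, zpow_natCast, pow_mul, ← inv_pow, ← mul_pow,
        Units.val_mul, Units.val_zpow_eq_zpow_val, Units.val_inv_eq_inv_val,
        Units.val_pow_eq_pow_val, Units.val_mk0]
    rw [e1, e2]
  have hcardR := (Nat.card_congr (Equiv.subtypeEquivRight hR)).trans Nat.card_eq_fintype_card
  refine Eq.trans ?_ (hmain.trans ?_)
  · refine Finset.sum_congr rfl fun x _ => Finset.sum_congr rfl fun z _ =>
      Finset.sum_congr rfl fun y _ => Finset.sum_congr rfl fun t _ => ?_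
    congr 1
    rw [Units.val_mk0]
    ring
  · rw [← hcardR]
    rfl
end

section
/- Assume bC − cB = 1. Then for every u ∈ K^×, the map (x,y,z) ↦ (x, x^{b+c·q^m}·y^{−b}·z^{−c}) is a bijection from the set {(x,y,z) ∈ K^× × K^× × K^× : x^A = u·y^B·z^C} onto K^× × K^×, with inverse (x,v) ↦ (x, x·u^c·v^{−C}, x^{q^m}·u^{−b}·v^B). -/
/-- The set `{(x,y,z) ∈ K^× × K^× × K^× : x^A = u y^B z^C}`, where
`A = (q^n-1)/(q-1)`, `B = (q^m-1)/(q-1)`, `C = (q^{n-m}-1)/(q-1)`. -/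
def triSet (q n m : ℕ) {K : Type*} [Field K] (u : Kˣ) : Set (Kˣ × Kˣ × Kˣ) :=
  {s | s.1 ^ ((q ^ n - 1) / (q - 1))
      = u * s.2.1 ^ ((q ^ m - 1) / (q - 1)) * s.2.2 ^ ((q ^ (n - m) - 1) / (q - 1))}

/-- The map `(x, y, z) ↦ (x, x^{b + c q^m} y^{-b} z^{-c})`. -/
def triFwd (q m : ℕ) (b c : ℤ) {K : Type*} [Field K] : Kˣ × Kˣ × Kˣ → Kˣ × Kˣ :=
  fun s => (s.1, s.1 ^ (b + c * ((q ^ m : ℕ) : ℤ)) * s.2.1 ^ (-b) * s.2.2 ^ (-c))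

/-- The map `(x, v) ↦ (x, x u^c v^{-C}, x^{q^m} u^{-b} v^B)`. -/
def triBwd (q n m : ℕ) (b c : ℤ) {K : Type*} [Field K] (u : Kˣ) :
    Kˣ × Kˣ → Kˣ × Kˣ × Kˣ :=
  fun w => (w.1,
    w.1 * u ^ c * w.2 ^ (-(((q ^ (n - m) - 1) / (q - 1) : ℕ) : ℤ)),
    w.1 ^ (q ^ m) * u ^ (-b) * w.2 ^ ((((q ^ m - 1) / (q - 1) : ℕ)) : ℤ))

section TriHelpers

lemma tri_num (q n m : ℕ) (hq : 2 ≤ q) (hmn : m < n) :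
    (q ^ n - 1) / (q - 1) = (q ^ m - 1) / (q - 1) + (q ^ (n - m) - 1) / (q - 1) * q ^ m := by
  rw [← Nat.geomSum_eq hq, ← Nat.geomSum_eq hq, ← Nat.geomSum_eq hq]
  obtain ⟨k, rfl⟩ := Nat.exists_eq_add_of_lt hmn
  have h1 : m + k + 1 - m = k + 1 := by omega
  rw [h1, add_assoc, Finset.sum_range_add, Finset.sum_mul]
  congr 1
  refine Finset.sum_congr rfl fun i _ => ?_
  rw [pow_add, mul_comm]

variable {M : Type*} [AddCommGroup M]

lemma tri_y (B C Q b c : ℤ) (h : b * C - c * B = 1) (x y z u : M)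
    (hs : (B + C * Q) • x = u + B • y + C • z) :
    x + c • u + (-C) • ((b + c * Q) • x + (-b) • y + (-c) • z) = y := by
  obtain rfl : u = (B + C * Q) • x - B • y - C • z := by rw [hs]; abel
  linear_combination (norm := module) h • (y - x)

lemma tri_z (B C Q b c : ℤ) (h : b * C - c * B = 1) (x y z u : M)
    (hs : (B + C * Q) • x = u + B • y + C • z) :
    Q • x + (-b) • u + B • ((b + c * Q) • x + (-b) • y + (-c) • z) = z := by
  obtain rfl : u = (B + C * Q) • x - B • y - C • z := by rw [hs]; abel
  linear_combination (norm := module) h • (z - Q • x)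

lemma tri_mem (B C Q b c : ℤ) (h : b * C - c * B = 1) (x v u : M) :
    (B + C * Q) • x = u + B • (x + c • u + (-C) • v) + C • (Q • x + (-b) • u + B • v) := by
  linear_combination (norm := module) h • u

lemma tri_v (B C Q b c : ℤ) (h : b * C - c * B = 1) (x v u : M) :
    (b + c * Q) • x + (-b) • (x + c • u + (-C) • v) + (-c) • (Q • x + (-b) • u + B • v) = v := by
  linear_combination (norm := module) h • v

end TriHelpers

theorem statement9 (p q n m : ℕ) (hp : p.Prime) (κ : ℕ) (hκ : 0 < κ) (hq : q = p ^ κ)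
    (hm : 1 ≤ m) (hmn : m < n)
    (Fq : Type*) [Field Fq] [Fintype Fq] (hcard : Fintype.card Fq = q)
    (K : Type*) [Field K] [Fintype K] [Algebra Fq K]
    (b c : ℤ)
    (hbc : b * (((q ^ (n - m) - 1) / (q - 1) : ℕ) : ℤ)
        - c * (((q ^ m - 1) / (q - 1) : ℕ) : ℤ) = 1)
    (u : Kˣ) :
    Set.BijOn (triFwd q m b c) (triSet q n m u) Set.univ
    ∧ (∀ s ∈ triSet q n m u, triBwd q n m b c u (triFwd q m b c s) = s)
    ∧ (∀ w : Kˣ × Kˣ, triBwd q n m b c u w ∈ triSet q n m u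
        ∧ triFwd q m b c (triBwd q n m b c u w) = w) := by
  have hq2 : 2 ≤ q := by
    rw [← hcard]; exact Fintype.one_lt_card
  have hA := tri_num q n m hq2 hmn
  have key1 : ∀ s ∈ triSet q n m u, triBwd q n m b c u (triFwd q m b c s) = s := by
    rintro ⟨x, y, z⟩ hs
    simp only [triSet, Set.mem_ofPred_eq, hA] at hs
    simp only [triBwd, triFwd]
    generalize (q ^ m - 1) / (q - 1) = B at *
    generalize (q ^ (n - m) - 1) / (q - 1) = C at *
    generalize q ^ m = Q at *
    have hs' : x ^ ((B : ℤ) + C * Q) = u * y ^ (B : ℤ) * z ^ (C : ℤ) := by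
      exact_mod_cast hs
    rw [← zpow_natCast x Q]
    exact Prod.ext rfl (Prod.ext
      (tri_y (M := Additive Kˣ) B C Q b c hbc (.ofMul x) (.ofMul y) (.ofMul z) (.ofMul u) hs')
      (tri_z (M := Additive Kˣ) B C Q b c hbc (.ofMul x) (.ofMul y) (.ofMul z) (.ofMul u) hs'))
  have key2 : ∀ w : Kˣ × Kˣ, triBwd q n m b c u w ∈ triSet q n m u
        ∧ triFwd q m b c (triBwd q n m b c u w) = w := by
    rintro ⟨x, v⟩
    simp only [triSet, Set.mem_ofPred_eq, hA, triBwd, triFwd]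
    generalize (q ^ m - 1) / (q - 1) = B at *
    generalize (q ^ (n - m) - 1) / (q - 1) = C at *
    generalize q ^ m = Q at *
    rw [← zpow_natCast x Q]
    constructor
    · have h := tri_mem (M := Additive Kˣ) B C Q b c hbc (.ofMul x) (.ofMul v) (.ofMul u)
      have h' : x ^ ((B : ℤ) + C * Q) = u * (x * u ^ c * v ^ (-(C : ℤ))) ^ (B : ℤ)
          * (x ^ (Q : ℤ) * u ^ (-b) * v ^ (B : ℤ)) ^ (C : ℤ) := h
      rw [zpow_natCast _ B, zpow_natCast _ C] at h'
      rw [← h', ← zpow_natCast]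
      push_cast
      rfl
    · exact Prod.ext rfl
        (tri_v (M := Additive Kˣ) B C Q b c hbc (.ofMul x) (.ofMul v) (.ofMul u))
  refine ⟨⟨fun _ _ => Set.mem_univ _, ?_, ?_⟩, key1, key2⟩
  · intro s hs t ht hst
    rw [← key1 s hs, ← key1 t ht, hst]
  · intro w _
    exact ⟨_, (key2 w).1, (key2 w).2⟩
end

section
/- Let χ : F_q^× → ℂ^× be a multiplicative character of order exactly q−1. Then for every u ∈ K^×: ∑_{j=0}^{q−2} ∑_{v ∈ K^×, u^{−b}·v^B + u^{c·q^m}·v^{−C·q^m} = 1} χ(Norm_{K/F_q}(v))^j = −1 + #{ w ∈ K : u^b·w^{q^m} − u^{b+c·q^m}·w^{q^n} = w }. -/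
lemma aux_inj (Fq : Type*) [Field Fq] [Fintype Fq]
    (χ : MulChar Fq ℂ) (hχ : orderOf χ = Fintype.card Fq - 1) (a : Fq) (ha : a ≠ 0)
    (h : χ a = 1) : a = 1 := by
  classical
  obtain ⟨g, hg⟩ := IsCyclic.exists_generator (α := Fqˣ)
  obtain ⟨k, hk⟩ : ∃ k : ℕ, g ^ k = Units.mk0 a ha := by
    have := hg (Units.mk0 a ha)
    rwa [← mem_powers_iff_mem_zpowers] at this
  have h2 : χ ^ k = 1 := by
    ext x
    obtain ⟨l, hl⟩ : ∃ l : ℕ, g ^ l = x := by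
      have := hg x
      rwa [← mem_powers_iff_mem_zpowers] at this
    have hak : (g : Fq) ^ k = a := by
      have := congrArg Units.val hk
      simpa using this
    rw [MulChar.pow_apply_coe, MulChar.one_apply_coe, ← hl, Units.val_pow_eq_pow_val, map_pow,
      ← pow_mul, mul_comm, pow_mul, ← map_pow, hak, h, one_pow]
  have h3 := orderOf_dvd_of_pow_eq_one h2
  have h4 : g ^ k = 1 := by
    obtain ⟨d, rfl⟩ := h3
    rw [hχ, ← Fintype.card_units, pow_mul, pow_card_eq_one, one_pow]
  rw [h4] at hk
  have := congrArg Units.val hk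
  simpa using this.symm

lemma aux_sum (Fq : Type*) [Field Fq] [Fintype Fq] [DecidableEq Fq]
    (χ : MulChar Fq ℂ) (hχ : orderOf χ = Fintype.card Fq - 1) (a : Fq) (ha : a ≠ 0) :
    ∑ j ∈ Finset.range (Fintype.card Fq - 1), χ a ^ j =
      if a = 1 then ((Fintype.card Fq - 1 : ℕ) : ℂ) else 0 := by
  split_ifs with h
  · subst h; simp
  · have h1 : χ a ≠ 1 := fun h' => h (aux_inj Fq χ hχ a ha h')
    rw [geom_sum_eq h1, ← map_pow, FiniteField.pow_card_sub_one_eq_one a ha]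
    simp

lemma aux_fiber (Fq : Type*) [Field Fq] [Fintype Fq] [DecidableEq Fq]
    (K : Type*) [Field K] [Fintype K] [DecidableEq K] [Algebra Fq K] (t : K) (ht : t ≠ 0) :
    (Finset.univ.filter (fun w : K => w ^ (Fintype.card Fq - 1) = t)).card =
      if Algebra.norm Fq t = 1 then Fintype.card Fq - 1 else 0 := by
  have hq1 : 0 < Fintype.card Fq - 1 := Nat.sub_pos_of_lt Fintype.one_lt_card
  obtain ⟨g, hg⟩ := IsCyclic.exists_generator (α := Fqˣ)
  have hprim : IsPrimitiveRoot (algebraMap Fq K g) (Fintype.card Fq - 1) := by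
    have h1 : IsPrimitiveRoot g (Fintype.card Fq - 1) := by
      rw [← Fintype.card_units, ← orderOf_eq_card_of_forall_mem_zpowers hg |>.trans
        Nat.card_eq_fintype_card]
      exact IsPrimitiveRoot.orderOf g
    exact (IsPrimitiveRoot.coe_units_iff.mpr h1).map_of_injective (algebraMap Fq K).injective
  have hex : (∃ α : K, α ^ (Fintype.card Fq - 1) = t) ↔ Algebra.norm Fq t = 1 := by
    constructor
    · rintro ⟨w, rfl⟩
      have hw : w ≠ 0 := by
        rintro rfl; exact ht (zero_pow hq1.ne')
      rw [map_pow, FiniteField.pow_card_sub_one_eq_one]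
      exact Algebra.norm_ne_zero_iff.mpr hw
    · intro hN
      have h1 := FiniteField.algebraMap_norm_eq_pow (K := Fq) (K' := K) (x := t)
      rw [hN, map_one, Nat.card_eq_fintype_card, Nat.card_eq_fintype_card] at h1
      obtain ⟨γ, hγ⟩ := IsCyclic.exists_generator (α := Kˣ)
      obtain ⟨k, hk⟩ : ∃ k : ℕ, γ ^ k = Units.mk0 t ht := by
        have := hγ (Units.mk0 t ht)
        rwa [← mem_powers_iff_mem_zpowers] at this
      have hdvd : Fintype.card Fq - 1 ∣ Fintype.card K - 1 := by
        rw [Module.card_eq_pow_finrank (K := Fq) (V := K)]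
        simpa using Nat.sub_dvd_pow_sub_pow (Fintype.card Fq) 1 (Module.finrank Fq K)
      obtain ⟨M, hM⟩ := hdvd
      have hK : 0 < Fintype.card K - 1 := Nat.sub_pos_of_lt Fintype.one_lt_card
      rw [hM, Nat.mul_div_cancel_left _ hq1] at h1
      have hM0 : 0 < M := by
        rcases Nat.eq_zero_or_pos M with h | h
        · subst h; omega
        · exact h
      have h2 : γ ^ (k * M) = 1 := by
        rw [pow_mul, hk]; ext; simp [← h1]
      have h3 := orderOf_dvd_of_pow_eq_one h2
      rw [orderOf_eq_card_of_forall_mem_zpowers hγ, Nat.card_eq_fintype_card,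
        Fintype.card_units, hM] at h3
      obtain ⟨d, rfl⟩ := Nat.dvd_of_mul_dvd_mul_right hM0 h3
      refine ⟨((γ ^ d : Kˣ) : K), ?_⟩
      have := congrArg Units.val hk
      rw [mul_comm, pow_mul] at this
      simpa using this
  have hc := hprim.card_nthRoots t
  have hnd := hprim.nthRoots_nodup ht
  have : Finset.univ.filter (fun w : K => w ^ (Fintype.card Fq - 1) = t)
      = (Polynomial.nthRoots (Fintype.card Fq - 1) t).toFinset := by
    ext w; simp [Polynomial.mem_nthRoots hq1]
  rw [this, Multiset.toFinset_card_of_nodup hnd, hc]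
  simp only [hex]

lemma aux_eqv (K : Type*) [Field K] (q n m : ℕ) (hq : 2 ≤ q) (hmn : m < n) (b c : ℤ)
    (u w : K) (hu : u ≠ 0) (hw : w ≠ 0) :
    (u ^ (-b) * ((w ^ (q - 1))⁻¹) ^ ((((q ^ m - 1) / (q - 1) : ℕ)) : ℤ)
              + u ^ (c * ((q ^ m : ℕ) : ℤ))
                * ((w ^ (q - 1))⁻¹) ^ (-(((((q ^ (n - m) - 1) / (q - 1)) * q ^ m : ℕ)) : ℤ)) = 1)
    ↔ u ^ (b : ℤ) * w ^ (q ^ m) - u ^ (b + c * ((q ^ m : ℕ) : ℤ)) * w ^ (q ^ n) = w := by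
  have hd : ∀ k, (q - 1) * ((q ^ k - 1) / (q - 1)) + 1 = q ^ k := by
    intro k
    rw [Nat.mul_div_cancel' (by simpa using Nat.sub_dvd_pow_sub_pow q 1 k)]
    have : 0 < q ^ k := by positivity
    omega
  have h1 := hd m
  have h2 := hd (n - m)
  have h3 : q ^ n = q ^ (n - m) * q ^ m := by rw [← pow_add]; congr 1; omega
  generalize (q ^ m - 1) / (q - 1) = B at *
  generalize (q ^ (n - m) - 1) / (q - 1) = C at *
  have e2 : w ^ (q ^ n) = (w ^ (q - 1)) ^ B * (w ^ (q - 1)) ^ (C * q ^ m) * w := by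
    rw [← pow_add, ← pow_mul, ← pow_succ]; congr 1
    rw [h3, ← h2]
    have : q ^ m = (q - 1) * B + 1 := h1.symm
    nlinarith
  have e1 : w ^ (q ^ m) = (w ^ (q - 1)) ^ B * w := by
    rw [← pow_mul, ← pow_succ, h1]
  rw [e1, e2]
  generalize ht : w ^ (q - 1) = t
  have ht0 : t ≠ 0 := ht ▸ pow_ne_zero _ hw
  rw [zpow_neg, zpow_neg, zpow_natCast, zpow_natCast, inv_pow, inv_pow, inv_inv, zpow_add₀ hu]
  have hx : u ^ b ≠ 0 := zpow_ne_zero _ hu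
  have hT : t ^ B ≠ 0 := pow_ne_zero _ ht0
  generalize u ^ b = x at *
  generalize u ^ (c * ((q ^ m : ℕ) : ℤ)) = y at *
  generalize t ^ B = T at *
  generalize t ^ (C * q ^ m) = S at *
  have key : (x * (T * w) - x * y * (T * S * w)) - w = (x * T * w) * (1 - (x⁻¹ * T⁻¹ + y * S)) := by
    field_simp
    ring
  have hne : x * T * w ≠ 0 := mul_ne_zero (mul_ne_zero hx hT) hw
  rw [← sub_eq_zero (b := w), key, mul_eq_zero, or_iff_right hne, sub_eq_zero, eq_comm]

theorem statement10 (p q n m : ℕ) (hp : p.Prime) (κ : ℕ) (hκ : 0 < κ) (hq : q = p ^ κ)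
    (hm : 1 ≤ m) (hmn : m < n)
    (Fq : Type*) [Field Fq] [Fintype Fq] (hcard : Fintype.card Fq = q)
    (K : Type*) [Field K] [Fintype K] [DecidableEq K] [Algebra Fq K]
    (b c : ℤ)
    (χ : MulChar Fq ℂ) (hχ : orderOf χ = q - 1)
    (u : K) (hu : u ≠ 0) :
    ∑ j ∈ Finset.range (q - 1),
        ∑ v ∈ Finset.univ.filter (fun v : K => v ≠ 0 ∧
            u ^ (-b) * v ^ ((((q ^ m - 1) / (q - 1) : ℕ)) : ℤ)
              + u ^ (c * ((q ^ m : ℕ) : ℤ))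
                * v ^ (-(((((q ^ (n - m) - 1) / (q - 1)) * q ^ m : ℕ)) : ℤ)) = 1),
          χ (Algebra.norm Fq v) ^ j
      = -1 + (Nat.card {w : K |
          u ^ (b : ℤ) * w ^ (q ^ m) - u ^ (b + c * ((q ^ m : ℕ) : ℤ)) * w ^ (q ^ n)
            = w} : ℂ) := by
  classical
  subst hcard
  have hq2 : 2 ≤ Fintype.card Fq := Fintype.one_lt_card
  rw [Finset.sum_comm]
  have hfib := Finset.card_eq_sum_card_fiberwise
    (f := fun w : K => (w ^ (Fintype.card Fq - 1))⁻¹)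
    (s := Finset.univ.filter (fun w : K => w ≠ 0 ∧
      u ^ (b : ℤ) * w ^ ((Fintype.card Fq) ^ m)
        - u ^ (b + c * (((Fintype.card Fq) ^ m : ℕ) : ℤ)) * w ^ ((Fintype.card Fq) ^ n) = w))
    (t := Finset.univ.filter (fun v : K => v ≠ 0 ∧
            u ^ (-b) * v ^ (((((Fintype.card Fq) ^ m - 1) / ((Fintype.card Fq) - 1) : ℕ)) : ℤ)
              + u ^ (c * (((Fintype.card Fq) ^ m : ℕ) : ℤ))
                * v ^ (-((((((Fintype.card Fq) ^ (n - m) - 1) / ((Fintype.card Fq) - 1))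
                  * (Fintype.card Fq) ^ m : ℕ)) : ℤ)) = 1))
    (by
      intro w hw
      rw [Finset.mem_coe, Finset.mem_filter] at hw ⊢
      exact ⟨Finset.mem_univ _, inv_ne_zero (pow_ne_zero _ hw.2.1),
        (aux_eqv K _ n m hq2 hmn b c u w hu hw.2.1).2 hw.2.2⟩)
  have hcardw : Nat.card {w : K |
          u ^ (b : ℤ) * w ^ ((Fintype.card Fq) ^ m)
            - u ^ (b + c * (((Fintype.card Fq) ^ m : ℕ) : ℤ)) * w ^ ((Fintype.card Fq) ^ n) = w}
      = (Finset.univ.filter (fun w : K => w ≠ 0 ∧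
      u ^ (b : ℤ) * w ^ ((Fintype.card Fq) ^ m)
        - u ^ (b + c * (((Fintype.card Fq) ^ m : ℕ) : ℤ)) * w ^ ((Fintype.card Fq) ^ n) = w)).card
        + 1 := by
    rw [← Finset.card_insert_of_notMem (a := (0 : K)) (by simp), Nat.card_eq_fintype_card]
    rw [← Set.toFinset_card]
    congr 1
    ext w
    by_cases hw : w = 0
    · subst hw
      simp [show Fintype.card Fq ≠ 0 by omega]
    · simp [hw]
  rw [hcardw, hfib]
  push_cast
  rw [neg_add_cancel_comm_assoc]
  refine Finset.sum_congr rfl fun v hv => ?_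
  rw [Finset.mem_filter] at hv
  have hv0 := hv.2.1
  rw [aux_sum Fq χ hχ _ (Algebra.norm_ne_zero_iff.mpr hv0)]
  have h1 := aux_fiber Fq K v⁻¹ (inv_ne_zero hv0)
  have h2 : Algebra.norm Fq v⁻¹ = 1 ↔ Algebra.norm Fq v = 1 := by
    rw [Algebra.norm_inv, inv_eq_one]
  simp only [h2] at h1
  have h3 : (Finset.univ.filter (fun w : K => w ^ (Fintype.card Fq - 1) = v⁻¹)).card =
      if Algebra.norm Fq v = 1 then Fintype.card Fq - 1 else 0 := h1
  rw [← Nat.cast_zero, ← Nat.cast_ite, ← h3]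
  congr 2
  ext w
  simp only [Finset.mem_filter, Finset.mem_univ, true_and]
  constructor
  · intro h
    have hw : w ≠ 0 := by
      rintro rfl
      rw [zero_pow (by omega)] at h
      exact inv_ne_zero hv0 h.symm
    have hv' : (w ^ (Fintype.card Fq - 1))⁻¹ = v := by rw [h, inv_inv]
    refine ⟨⟨hw, ?_⟩, hv'⟩
    apply (aux_eqv K _ n m hq2 hmn b c u w hu hw).1
    rw [hv']
    exact hv.2.2
  · rintro ⟨-, h⟩
    rw [← h, inv_inv]
end

section
/- Assume bC − cB = 1, let g := gcd(q−1, c) and k := (q−1)/g. Then for every u ∈ K^×, the map w ↦ w·u^{−c/g} is a bijection from { w ∈ K^× : w^{q^m−1} − w^{q^n−1} = u^{−k} } onto { w ∈ K^× : u^{k·C·b}·w^{q^m−1} − u^{k·C·(b+c·q^m)}·w^{q^n−1} = 1 }; in particular these two sets have the same cardinality. -/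
theorem statement13 (p q n m : ℕ) (hp : p.Prime) (κ : ℕ) (hκ : 0 < κ) (hq : q = p ^ κ)
    (hm : 1 ≤ m) (hmn : m < n)
    (Fq : Type*) [Field Fq] [Fintype Fq] (hcard : Fintype.card Fq = q)
    (K : Type*) [Field K] [Fintype K] [Algebra Fq K]
    (b c : ℤ)
    (hbc : b * (((q ^ (n - m) - 1) / (q - 1) : ℕ) : ℤ)
        - c * (((q ^ m - 1) / (q - 1) : ℕ) : ℤ) = 1)
    -- g := gcd(q-1, c) and k := (q-1)/g
    (g k : ℕ) (hg : g = Int.gcd (((q - 1 : ℕ)) : ℤ) c) (hk : k = (q - 1) / g)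
    (u : Kˣ) :
    Set.BijOn (fun w : Kˣ => w * u ^ (-(c / (g : ℤ))))
        {w : Kˣ | (w : K) ^ (q ^ m - 1) - (w : K) ^ (q ^ n - 1)
            = ((u ^ (-(k : ℤ)) : Kˣ) : K)}
        {w : Kˣ | ((u ^ ((k : ℤ) * (((q ^ (n - m) - 1) / (q - 1) : ℕ) : ℤ) * b) : Kˣ) : K)
              * (w : K) ^ (q ^ m - 1)
            - ((u ^ ((k : ℤ) * (((q ^ (n - m) - 1) / (q - 1) : ℕ) : ℤ)
                  * (b + c * ((q ^ m : ℕ) : ℤ))) : Kˣ) : K)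
              * (w : K) ^ (q ^ n - 1) = 1}
    ∧ Nat.card {w : Kˣ | (w : K) ^ (q ^ m - 1) - (w : K) ^ (q ^ n - 1)
            = ((u ^ (-(k : ℤ)) : Kˣ) : K)}
      = Nat.card {w : Kˣ |
          ((u ^ ((k : ℤ) * (((q ^ (n - m) - 1) / (q - 1) : ℕ) : ℤ) * b) : Kˣ) : K)
              * (w : K) ^ (q ^ m - 1)
            - ((u ^ ((k : ℤ) * (((q ^ (n - m) - 1) / (q - 1) : ℕ) : ℤ)
                  * (b + c * ((q ^ m : ℕ) : ℤ))) : Kˣ) : K)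
              * (w : K) ^ (q ^ n - 1) = 1} := by
  have hq2 : 2 ≤ q := by
    rw [hq]
    exact le_trans hp.two_le (Nat.le_self_pow hκ.ne' p)
  have hdiv : ∀ i : ℕ, (q - 1) * ((q ^ i - 1) / (q - 1)) = q ^ i - 1 := by
    intro i
    apply Nat.mul_div_cancel'
    simpa using Nat.sub_dvd_pow_sub_pow q 1 i
  have hB := hdiv m
  have hC := hdiv (n - m)
  generalize (q ^ m - 1) / (q - 1) = B at *
  generalize (q ^ (n - m) - 1) / (q - 1) = C at *
  have hqi : ∀ i : ℕ, ((q ^ i - 1 : ℕ) : ℤ) = (q : ℤ) ^ i - 1 := by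
    intro i
    rw [Nat.cast_sub (Nat.one_le_pow _ _ (by omega))]
    push_cast
    rfl
  have hBz : ((q - 1 : ℕ) : ℤ) * B = (q : ℤ) ^ m - 1 := by
    rw [← hqi, ← hB]; push_cast; rfl
  have hCz : ((q - 1 : ℕ) : ℤ) * C = (q : ℤ) ^ (n - m) - 1 := by
    rw [← hqi, ← hC]; push_cast; rfl
  have hAz : (q : ℤ) ^ n - 1 = ((q - 1 : ℕ) : ℤ) * (B + C * (q : ℤ) ^ m) := by
    have h1 : (q : ℤ) ^ n = (q : ℤ) ^ (n - m) * (q : ℤ) ^ m := by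
      rw [← pow_add, Nat.sub_add_cancel hmn.le]
    rw [h1]
    linear_combination -hBz - (q : ℤ) ^ m * hCz
  have hgk : ((q - 1 : ℕ) : ℤ) = k * g := by
    have : g ∣ q - 1 := by
      rw [hg]
      exact_mod_cast Int.gcd_dvd_left (a := ((q - 1 : ℕ) : ℤ)) (b := c)
    rw [hk]
    exact_mod_cast (Nat.div_mul_cancel this).symm
  have hgc : c / (g : ℤ) * g = c := by
    apply Int.ediv_mul_cancel
    rw [hg]
    exact Int.gcd_dvd_right ..
  generalize c / (g : ℤ) = s at *
  have e1 : ∀ w : Kˣ, u ^ ((k : ℤ) * (C : ℤ) * b) * (w * u ^ (-s)) ^ (q ^ m - 1)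
      = u ^ (k : ℤ) * w ^ (q ^ m - 1) := by
    intro w
    rw [mul_pow, ← zpow_natCast (u ^ (-s)), ← zpow_mul, hqi, mul_left_comm, ← zpow_add, mul_comm]
    congr 2
    rw [← hBz, hgk]
    linear_combination (k : ℤ) * hbc - k * B * hgc
  have e2 : ∀ w : Kˣ, u ^ ((k : ℤ) * (C : ℤ) * (b + c * ((q ^ m : ℕ) : ℤ)))
        * (w * u ^ (-s)) ^ (q ^ n - 1)
      = u ^ (k : ℤ) * w ^ (q ^ n - 1) := by
    intro w
    rw [mul_pow, ← zpow_natCast (u ^ (-s)), ← zpow_mul, hqi, mul_left_comm, ← zpow_add, mul_comm]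
    congr 2
    rw [hAz, hgk]
    push_cast
    linear_combination (k : ℤ) * hbc - k * (B + C * (q : ℤ) ^ m) * hgc
  have key : Set.BijOn (fun w : Kˣ => w * u ^ (-s))
        {w : Kˣ | (w : K) ^ (q ^ m - 1) - (w : K) ^ (q ^ n - 1)
            = ((u ^ (-(k : ℤ)) : Kˣ) : K)}
        {w : Kˣ | ((u ^ ((k : ℤ) * (C : ℤ) * b) : Kˣ) : K)
              * (w : K) ^ (q ^ m - 1)
            - ((u ^ ((k : ℤ) * (C : ℤ)
                  * (b + c * ((q ^ m : ℕ) : ℤ))) : Kˣ) : K)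
              * (w : K) ^ (q ^ n - 1) = 1} := by
    have hiff : ∀ w : Kˣ, (w : K) ^ (q ^ m - 1) - (w : K) ^ (q ^ n - 1)
            = ((u ^ (-(k : ℤ)) : Kˣ) : K) ↔
          ((u ^ ((k : ℤ) * (C : ℤ) * b) : Kˣ) : K)
              * ((w * u ^ (-s) : Kˣ) : K) ^ (q ^ m - 1)
            - ((u ^ ((k : ℤ) * (C : ℤ)
                  * (b + c * ((q ^ m : ℕ) : ℤ))) : Kˣ) : K)
              * ((w * u ^ (-s) : Kˣ) : K) ^ (q ^ n - 1) = 1 := by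
      intro w
      have h1 := congrArg (Units.val) (e1 w)
      have h2 := congrArg (Units.val) (e2 w)
      rw [Units.val_mul, Units.val_pow_eq_pow_val, Units.val_mul (u ^ (k : ℤ)),
        Units.val_pow_eq_pow_val] at h1 h2
      rw [h1, h2, ← mul_sub, zpow_neg, mul_comm, Units.mul_eq_one_iff_eq_inv]
    refine ⟨fun w hw => (hiff w).1 hw, fun x _ y _ h => mul_right_cancel h, fun y hy => ?_⟩
    refine ⟨y * u ^ s, (hiff _).2 ?_, ?_⟩
    · have : y * u ^ s * u ^ (-s) = y := by simp
      rw [this]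
      exact hy
    · simp
  exact ⟨key, Nat.card_congr (key.equiv _)⟩
end

section
/- Assume bC − cB = 1 and set d := (q−1)/gcd(q−1, b+c). If ν, μ ∈ F_q^× satisfy ν^n = μ^{b+c}, then ν^d = 1. -/
theorem aux_geom16 (q m : ℕ) (hq : 2 ≤ q) :
    (((q - 1 : ℕ)) : ℤ) ∣ (((q ^ m - 1) / (q - 1) : ℕ) : ℤ) - m := by
  rw [← Nat.geomSum_eq hq m, Nat.cast_sub (by omega)]
  induction m with
  | zero => simp
  | succ k ih =>
    rw [Finset.sum_range_succ]
    have h : ((q : ℤ) - ((1 : ℕ) : ℤ)) ∣ (q : ℤ) ^ k - 1 := by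
      simpa using sub_dvd_pow_sub_pow (q : ℤ) 1 k
    obtain ⟨u, hu⟩ := ih
    obtain ⟨v, hv⟩ := h
    refine ⟨u + v, ?_⟩
    push_cast at hu hv ⊢
    linear_combination hu + hv

theorem statement16 (p q n m : ℕ) (hp : p.Prime) (κ : ℕ) (hκ : 0 < κ) (hq : q = p ^ κ)
    (hm : 1 ≤ m) (hmn : m < n)
    (Fq : Type*) [Field Fq] [Fintype Fq] (hcard : Fintype.card Fq = q)
    (b c : ℤ)
    (hbc : b * (((q ^ (n - m) - 1) / (q - 1) : ℕ) : ℤ)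
        - c * (((q ^ m - 1) / (q - 1) : ℕ) : ℤ) = 1)
    -- d := (q-1)/gcd(q-1, b+c)
    (d : ℕ) (hd : d = (q - 1) / Int.gcd (((q - 1 : ℕ)) : ℤ) (b + c))
    (ν μ : Fqˣ) (hνμ : ν ^ n = μ ^ (b + c)) :
    ν ^ d = 1 := by
  classical
  have hq2 : 2 ≤ q := by
    rw [← hcard]
    exact Fintype.one_lt_card
  have hone : ∀ (x : Fqˣ) (e : ℤ), (((q - 1 : ℕ)) : ℤ) ∣ e → x ^ e = 1 := by
    rintro x e ⟨k, rfl⟩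
    have h1 : x ^ (q - 1) = 1 := by
      rw [← hcard, ← Fintype.card_units]
      exact pow_card_eq_one
    rw [zpow_mul, zpow_natCast, h1, one_zpow]
  have hB := aux_geom16 q m hq2
  have hC := aux_geom16 q (n - m) hq2
  rw [Nat.cast_sub hmn.le] at hC
  have hdiv : (((q - 1 : ℕ)) : ℤ) ∣ 1 - (n * b - m * (b + c)) := by
    obtain ⟨u, hu⟩ := hB
    obtain ⟨v, hv⟩ := hC
    refine ⟨b * v - c * u, ?_⟩
    linear_combination b * hv - c * hu - hbc
  have hν : ν = (μ ^ b * ν ^ (-(m : ℤ))) ^ (b + c) := by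
    have h := hone ν _ hdiv
    rw [zpow_sub, zpow_one, mul_inv_eq_one] at h
    rw [mul_zpow, ← zpow_mul, ← zpow_mul, mul_comm b, zpow_mul μ, ← hνμ, ← zpow_natCast,
      ← zpow_mul, ← zpow_add]
    refine h.trans ?_
    congr 1
    ring
  have hdd : (((q - 1 : ℕ)) : ℤ) ∣ (b + c) * (d : ℤ) := by
    obtain ⟨k, hk⟩ := Int.gcd_dvd_right (((q - 1 : ℕ)) : ℤ) (b + c)
    have hg : Int.gcd (((q - 1 : ℕ)) : ℤ) (b + c) ∣ q - 1 :=
      Int.natCast_dvd_natCast.mp (Int.gcd_dvd_left _ _)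
    have h3 := Nat.mul_div_cancel' hg
    rw [← hd] at h3
    refine ⟨k, ?_⟩
    have h4 : ((Int.gcd (((q - 1 : ℕ)) : ℤ) (b + c) : ℕ) : ℤ) * (d : ℤ) = ((q - 1 : ℕ) : ℤ) := by
      exact_mod_cast h3
    linear_combination (d : ℤ) * hk + k * h4
  rw [hν, ← zpow_natCast, ← zpow_mul]
  exact hone _ _ hdd
end

section
/- Assume q is odd, n is even and bC − cB = 1. Then d := (q−1)/gcd(q−1, b+c) is even. -/
lemma geom_even_iff (q : ℕ) (hq : Odd q) (k : ℕ) :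
    Even (∑ i ∈ Finset.range k, q ^ i) ↔ Even k := by
  induction k with
  | zero => simp
  | succ k ih =>
    rw [Finset.sum_range_succ, Nat.even_add, ih, Nat.even_add_one]
    have : ¬ Even (q ^ k) := Nat.not_even_iff_odd.mpr hq.pow
    tauto

theorem statement17 (p q n m : ℕ) (hp : p.Prime) (κ : ℕ) (hκ : 0 < κ) (hq : q = p ^ κ)
    (hm : 1 ≤ m) (hmn : m < n)
    (hqodd : Odd q) (hneven : Even n)
    (b c : ℤ)
    (hbc : b * (((q ^ (n - m) - 1) / (q - 1) : ℕ) : ℤ)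
        - c * (((q ^ m - 1) / (q - 1) : ℕ) : ℤ) = 1)
    -- d := (q-1)/gcd(q-1, b+c)
    (d : ℕ) (hd : d = (q - 1) / Int.gcd (((q - 1 : ℕ)) : ℤ) (b + c)) :
    Even d := by
  have hq2 : 2 ≤ q := by
    rw [hq]
    exact hp.two_le.trans (Nat.le_self_pow hκ.ne' p)
  rw [← Nat.geomSum_eq hq2, ← Nat.geomSum_eq hq2] at hbc
  have h1 := geom_even_iff q hqodd (n - m)
  have h2 := geom_even_iff q hqodd m
  rw [Nat.even_sub hmn.le] at h1
  generalize (∑ i ∈ Finset.range (n - m), q ^ i) = C at *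
  generalize (∑ i ∈ Finset.range m, q ^ i) = B at *
  have hpar : ¬ Even (b * (C : ℤ) - c * (B : ℤ)) := by rw [hbc]; decide
  rw [Int.even_sub, Int.even_mul, Int.even_mul, Int.even_coe_nat, Int.even_coe_nat] at hpar
  have hodd : ¬ Even (b + c) := by
    rw [Int.even_add]; tauto
  have hg : ¬ Even (Int.gcd (((q - 1 : ℕ)) : ℤ) (b + c)) := by
    intro h
    apply hodd
    rw [even_iff_two_dvd] at h ⊢
    exact (Int.natCast_dvd_natCast.mpr h).trans (Int.gcd_dvd_right _ _)
  have hdvd : Int.gcd (((q - 1 : ℕ)) : ℤ) (b + c) ∣ q - 1 :=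
    Int.natCast_dvd_natCast.mp (Int.gcd_dvd_left _ _)
  have he : Even (q - 1) := hqodd.tsub_odd odd_one
  have hmul := Nat.div_mul_cancel hdvd
  rw [← hmul, Nat.even_mul] at he
  rw [hd]
  exact he.resolve_right hg
end
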